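/- arXiv:2412.18002 — 4 statements merged into one kernel-verified Lean document; each statement's English description precedes it below -/
import Mathlib

section
/- For every integer h ≥ 41020 and every integer k ≥ h, every k-nice subset of ℤ² whose height is exactly h has at most (3264π/10255)·k + (4946/3675)·h + 1 elements. -/
/-- A set `Q ⊆ ℤ²` is `k`-nice if every element is a nonzero coprime pair,
`Q` does not contain both a pair and its negation, and all cross determinants
are bounded by `k` in absolute value. -/
def IsKNice (k : ℕ) (Q : Set (ℤ × ℤ)) : Prop :=
  (∀ p ∈ Q, p ≠ (0, 0) ∧ Int.gcd p.1 p.2 = 1) ∧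
  (∀ p ∈ Q, -p ∉ Q) ∧
  (∀ p ∈ Q, ∀ q ∈ Q, |p.1 * q.2 - q.1 * p.2| ≤ (k : ℤ))

/-- `Q` is y-non-negative: all second coordinates are non-negative. -/
def YNonneg (Q : Set (ℤ × ℤ)) : Prop := ∀ p ∈ Q, 0 ≤ p.2

/-- The height of `Q` is at most `h`. -/
def HeightLe (Q : Set (ℤ × ℤ)) (h : ℕ) : Prop := ∀ p ∈ Q, |p.2| ≤ (h : ℤ)

/-- The height of `Q` is exactly `h`: the maximum of `|n|` over `(m, n) ∈ Q` is `h`. -/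
def HeightEq (Q : Set (ℤ × ℤ)) (h : ℕ) : Prop :=
  HeightLe Q h ∧ ∃ p ∈ Q, |p.2| = (h : ℤ)

/-- `210 * φ(d)/d`. -/
def cTab : ℕ → ℤ
  | 1 => 210 | 2 => 105 | 3 => 140 | 5 => 168 | 6 => 70 | 7 => 180 | 10 => 84 | 14 => 90
  | 15 => 112 | 21 => 120 | 30 => 56 | 35 => 144 | 42 => 60 | 70 => 72 | 105 => 96 | 210 => 48
  | _ => 0

/-- `210` times the sieve error constant. -/
def eTab : ℕ → ℤ
  | 1 => 210 | 2 => 210 | 3 => 280 | 5 => 336 | 6 => 280 | 7 => 360 | 10 => 336 | 14 => 360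
  | 15 => 392 | 21 => 480 | 30 => 392 | 35 => 528 | 42 => 480 | 70 => 528 | 105 => 636 | 210 => 636
  | _ => 0

/-- discrepancy function -/
def gTab (d : ℕ) : ℕ → ℤ
  | 0 => 0
  | r + 1 => gTab d r + (if Nat.gcd r d = 1 then 210 else 0) - cTab d

/-- minimum of the discrepancy (times `210`). -/
def loTab : ℕ → ℤ
  | 1 => 0 | 2 => -105 | 3 => -140 | 5 => -168 | 6 => -140 | 7 => -180 | 10 => -168 | 14 => -180
  | 15 => -196 | 21 => -240 | 30 => -196 | 35 => -264 | 42 => -240 | 70 => -264 | 105 => -318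
  | 210 => -318 | _ => 0

theorem gTab_bounds : ∀ d ∈ Nat.divisors 210, gTab d 210 = 0 ∧ ∀ r < 210,
    loTab d ≤ gTab d r ∧ gTab d r ≤ loTab d + eTab d - cTab d := by
  decide +kernel

theorem tab_nonneg : ∀ d ∈ Nat.divisors 210, 0 ≤ cTab d ∧ 0 ≤ eTab d := by
  decide +kernel

theorem gTab_step (d : ℕ) (hd : d ∈ Nat.divisors 210) (m : ℤ) :
    gTab d ((m + 1) % 210).toNat = gTab d (m % 210).toNat
      + (if Int.gcd m d = 1 then 210 else 0) - cTab d := by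
  have h1 : Int.gcd m d = Nat.gcd (m % 210).toNat d := by
    have hdd : (d : ℤ) ∣ 210 := by exact_mod_cast Nat.dvd_of_mem_divisors hd
    have h2 : ((m % 210).toNat : ℤ) = m % 210 := Int.toNat_of_nonneg (by omega)
    have : Nat.gcd (m % 210).toNat d = Int.gcd (m % 210) d := by
      conv_rhs => rw [← h2]
      rw [Int.gcd_natCast_natCast]
    rw [this]
    obtain ⟨c, hc⟩ := hdd
    have h3 : m = m % 210 + (d : ℤ) * (c * (m / 210)) := by
      rw [← mul_assoc, ← hc]; omega
    conv_lhs => rw [h3]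
    simp
  rw [h1]
  by_cases h : m % 210 = 209
  · have : (m + 1) % 210 = 0 := by omega
    rw [this, h]
    have := (gTab_bounds d hd).1
    change gTab d (209 + 1) = 0 at this
    rw [gTab] at this
    have h0 : gTab d (0 : ℤ).toNat = 0 := rfl
    have h9 : (209 : ℤ).toNat = 209 := rfl
    rw [h0, h9]
    exact this.symm
  · have : ((m + 1) % 210).toNat = (m % 210).toNat + 1 := by omega
    rw [this, gTab]

theorem count_interval (d : ℕ) (hd : d ∈ Nat.divisors 210) (a : ℤ) (l : ℕ) :
    210 * (((Finset.Ico a (a + l)).filter (fun m => Int.gcd m d = 1)).card : ℤ)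
      = cTab d * l + gTab d ((a + l) % 210).toNat - gTab d (a % 210).toNat := by
  induction l with
  | zero => simp
  | succ l ih =>
    have h1 : Finset.Ico a (a + (l + 1 : ℕ)) = insert (a + l) (Finset.Ico a (a + l)) := by
      ext x; simp; omega
    rw [h1, Finset.filter_insert]
    have h2 := gTab_step d hd (a + l)
    have h3 : a + ((l + 1 : ℕ) : ℤ) = a + l + 1 := by push_cast; ring
    rw [h3, h2]
    split_ifs with h
    · rw [Finset.card_insert_of_notMem (by simp)]
      push_cast; linarith
    · push_cast; linarith

theorem card_row (d : ℕ) (hd : d ∈ Nat.divisors 210) (S : Finset ℤ) (L : ℝ) (hL : 0 ≤ L)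
    (hS : ∀ m ∈ S, Int.gcd m d = 1) (hSL : ∀ m ∈ S, ∀ m' ∈ S, (m' : ℝ) - m ≤ L) :
    210 * (S.card : ℝ) ≤ cTab d * L + eTab d := by
  obtain ⟨hc, he⟩ := tab_nonneg d hd
  have hc' : (0 : ℝ) ≤ cTab d := by exact_mod_cast hc
  have he' : (0 : ℝ) ≤ eTab d := by exact_mod_cast he
  rcases S.eq_empty_or_nonempty with rfl | hne
  · simp; positivity
  · set a := S.min' hne
    set b := S.max' hne
    have hab : a ≤ b := S.min'_le_max' hne
    have h1 := hSL a (S.min'_mem hne) b (S.max'_mem hne)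
    have hsub : S ⊆ (Finset.Ico a (a + ((b - a + 1).toNat : ℕ))).filter (fun m => Int.gcd m d = 1) := by
      intro m hm
      have h2 := S.min'_le m hm
      have h3 := S.le_max' m hm
      simp only [Finset.mem_filter, Finset.mem_Ico]
      refine ⟨⟨h2, ?_⟩, hS m hm⟩
      change m ≤ b at h3
      omega
    have h2 := Finset.card_le_card hsub
    have h3 := count_interval d hd a (b - a + 1).toNat
    have h4 := ((gTab_bounds d hd).2 ((a + ((b - a + 1).toNat : ℕ)) % 210).toNat (by omega)).2
    have h5 := ((gTab_bounds d hd).2 (a % 210).toNat (by omega)).1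
    have h6 : (((b - a + 1).toNat : ℕ) : ℤ) = b - a + 1 := Int.toNat_of_nonneg (by omega)
    have h7 : 210 * (S.card : ℤ) ≤ cTab d * (b - a) + eTab d := by
      rw [h6] at h3 h4
      have : (S.card : ℤ) ≤ _ := Nat.cast_le.mpr h2
      rw [h6] at this
      nlinarith
    have h8 : 210 * (S.card : ℝ) ≤ cTab d * (b - a) + eTab d := by exact_mod_cast h7
    nlinarith

/-- partial sums over a period -/
def sumTab (f : ℕ → ℤ) : ℕ → ℤ
  | 0 => 0
  | r + 1 => sumTab f r + f (Nat.gcd (r + 1) 210)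

theorem sumTab_eq (f : ℕ → ℤ) (N : ℕ) :
    ∑ i ∈ Finset.range N, f (Nat.gcd (i + 1) 210) = sumTab f N := by
  induction N with
  | zero => simp [sumTab]
  | succ n ih => rw [Finset.sum_range_succ, ih, sumTab]

theorem sumTab_add (f : ℕ → ℤ) (N : ℕ) : sumTab f (N + 210) = sumTab f N + sumTab f 210 := by
  induction N with
  | zero =>
    have h0 : sumTab f 0 = 0 := rfl
    rw [h0, zero_add, zero_add]
  | succ n ih =>
    have h1 : sumTab f (n + 1) = sumTab f n + f (Nat.gcd (n + 1) 210) := rfl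
    rw [show n + 1 + 210 = (n + 210) + 1 by ring, sumTab, ih, h1]
    have : Nat.gcd (n + 210 + 1) 210 = Nat.gcd (n + 1) 210 := by
      rw [show n + 210 + 1 = n + 1 + 210 by ring]; simp
    rw [this]; omega

theorem sum_c (N : ℕ) : 210 * ∑ i ∈ Finset.range N, cTab (Nat.gcd (i + 1) 210) ≤ 27648 * N + 44100 := by
  rw [sumTab_eq]
  induction N using Nat.strong_induction_on with
  | _ N ih =>
    by_cases hN : N < 210
    · have : ∀ r < 210, 210 * sumTab cTab r ≤ 27648 * (r : ℤ) + 44100 := by decide +kernel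
      exact this N hN
    · obtain ⟨M, rfl⟩ : ∃ M, N = M + 210 := ⟨N - 210, by omega⟩
      have := ih M (by omega)
      have h0 : sumTab cTab 210 = 27648 := by decide +kernel
      rw [sumTab_add, h0]
      push_cast
      linarith

theorem sum_e (N : ℕ) : 210 * ∑ i ∈ Finset.range N, eTab (Nat.gcd (i + 1) 210) ≤ 59352 * N := by
  rw [sumTab_eq]
  induction N using Nat.strong_induction_on with
  | _ N ih =>
    by_cases hN : N < 210
    · have : ∀ r < 210, 210 * sumTab eTab r ≤ 59352 * (r : ℤ) := by decide +kernel
      exact this N hN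
    · obtain ⟨M, rfl⟩ : ∃ M, N = M + 210 := ⟨N - 210, by omega⟩
      have := ih M (by omega)
      have h0 : sumTab eTab 210 = 59352 := by decide +kernel
      rw [sumTab_add, h0]
      push_cast
      linarith

theorem abel_bound (s f : ℕ → ℝ) (D : ℝ) (hs : ∀ N, ∑ i ∈ Finset.range N, s i ≤ D) (N : ℕ)
    (hf : ∀ i, i + 1 ≤ N → f (i + 1) ≤ f i) (hf0 : 0 ≤ f N) :
    ∑ i ∈ Finset.range (N + 1), s i * f i ≤ D * f 0 := by
  have key : ∀ M ≤ N, ∑ i ∈ Finset.range (M + 1), s i * f i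
      ≤ (∑ i ∈ Finset.range (M + 1), s i) * f M + D * (f 0 - f M) := by
    intro M
    induction M with
    | zero => intro _; simp
    | succ M ih =>
      intro hM
      rw [Finset.sum_range_succ, Finset.sum_range_succ s (M + 1)]
      have h1 := ih (by omega)
      have h2 := hf M hM
      have h3 := hs (M + 1)
      nlinarith
  have h1 := key N le_rfl
  have h2 := hs (N + 1)
  nlinarith

open MeasureTheory Set in
theorem integral_bound (L : ℝ → ℝ) (h k : ℝ) (hh : 0 < h)
    (hL : AntitoneOn L (Set.Icc 0 h))
    (hin : ∀ u ∈ Set.Icc 0 h, ∀ v ∈ Set.Icc 0 h, v * L u + u * L v ≤ 2 * k) :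
    ∫ x in (0:ℝ)..h, L x ≤ Real.pi * k / 2 := by
  have hpi := Real.pi_pos
  have hint : IntegrableOn L (Icc 0 h) := hL.integrableOn_isCompact isCompact_Icc
  have hc0 : ∀ t ∈ Icc (0:ℝ) (Real.pi / 2), 0 ≤ Real.cos t := fun t ht =>
    Real.cos_nonneg_of_mem_Icc ⟨by linarith [ht.1], ht.2⟩
  have hs0 : ∀ t ∈ Icc (0:ℝ) (Real.pi / 2), 0 ≤ Real.sin t := fun t ht =>
    Real.sin_nonneg_of_mem_Icc ⟨ht.1, by linarith [ht.2]⟩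
  have im1 : (fun t => h * Real.sin t) '' Icc 0 (Real.pi / 2) = Icc 0 h := by
    apply Subset.antisymm
    · rintro _ ⟨t, ht, rfl⟩
      exact ⟨mul_nonneg hh.le (hs0 t ht), by nlinarith [Real.sin_le_one t]⟩
    · have := intermediate_value_Icc (by positivity : (0:ℝ) ≤ Real.pi / 2)
        (f := fun t => h * Real.sin t) (by fun_prop)
      simpa using this
  have im2 : (fun t => h * Real.cos t) '' Icc 0 (Real.pi / 2) = Icc 0 h := by
    apply Subset.antisymm
    · rintro _ ⟨t, ht, rfl⟩
      exact ⟨mul_nonneg hh.le (hc0 t ht), by nlinarith [Real.cos_le_one t]⟩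
    · have := intermediate_value_Icc' (by positivity : (0:ℝ) ≤ Real.pi / 2)
        (f := fun t => h * Real.cos t) (by fun_prop)
      simpa using this
  have inj1 : InjOn (fun t => h * Real.sin t) (Icc 0 (Real.pi / 2)) := by
    intro a ha b hb hab
    have : Real.sin a = Real.sin b := mul_left_cancel₀ hh.ne' hab
    exact Real.injOn_sin ⟨by linarith [ha.1], ha.2⟩ ⟨by linarith [hb.1], hb.2⟩ this
  have inj2 : InjOn (fun t => h * Real.cos t) (Icc 0 (Real.pi / 2)) := by
    intro a ha b hb hab
    have : Real.cos a = Real.cos b := mul_left_cancel₀ hh.ne' hab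
    exact Real.injOn_cos ⟨ha.1, by linarith [ha.2]⟩ ⟨hb.1, by linarith [hb.2]⟩ this
  have d1 : ∀ t ∈ Icc 0 (Real.pi / 2), HasDerivWithinAt (fun t => h * Real.sin t)
      (h * Real.cos t) (Icc 0 (Real.pi / 2)) t := fun t _ =>
    ((Real.hasDerivAt_sin t).const_mul h).hasDerivWithinAt
  have d2 : ∀ t ∈ Icc 0 (Real.pi / 2), HasDerivWithinAt (fun t => h * Real.cos t)
      (h * -Real.sin t) (Icc 0 (Real.pi / 2)) t := fun t _ =>
    ((Real.hasDerivAt_cos t).const_mul h).hasDerivWithinAt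
  have e1 := integral_image_eq_integral_abs_deriv_smul measurableSet_Icc d1 inj1 L
  have e2 := integral_image_eq_integral_abs_deriv_smul measurableSet_Icc d2 inj2 L
  have i1 := (integrableOn_image_iff_integrableOn_abs_deriv_smul measurableSet_Icc d1 inj1 L).1
    (by rw [im1]; exact hint)
  have i2 := (integrableOn_image_iff_integrableOn_abs_deriv_smul measurableSet_Icc d2 inj2 L).1
    (by rw [im2]; exact hint)
  rw [im1] at e1
  rw [im2] at e2
  have hsum : 2 * ∫ x in Icc 0 h, L x ≤ ∫ t in Icc (0:ℝ) (Real.pi / 2), 2 * k := by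
    rw [two_mul]
    nth_rewrite 1 [e1]
    rw [e2, ← integral_add i1 i2]
    apply setIntegral_mono_on (i1.add i2) (integrableOn_const (by simp)) measurableSet_Icc
    intro t ht
    have hu : h * Real.sin t ∈ Icc 0 h := im1 ▸ mem_image_of_mem _ ht
    have hv : h * Real.cos t ∈ Icc 0 h := im2 ▸ mem_image_of_mem _ ht
    have := hin _ hu _ hv
    have a1 : |h * Real.cos t| = h * Real.cos t := abs_of_nonneg hv.1
    have a2 : |h * -Real.sin t| = h * Real.sin t := by
      rw [mul_neg, abs_neg]; exact abs_of_nonneg hu.1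
    change |h * Real.cos t| * L (h * Real.sin t) + |h * -Real.sin t| * L (h * Real.cos t) ≤ 2 * k
    rw [a1, a2]
    exact this
  rw [intervalIntegral.integral_of_le hh.le, ← integral_Icc_eq_integral_Ioc]
  simp at hsum
  rw [max_eq_left (by positivity)] at hsum
  linarith

/-- real determinant -/
noncomputable def rdet (x y : ℝ × ℝ) : ℝ := x.1 * y.2 - y.1 * x.2

theorem rdet_hull (S : Set (ℝ × ℝ)) (k : ℝ) (hS : ∀ x ∈ S, ∀ y ∈ S, rdet x y ≤ k) :
    ∀ x ∈ convexHull ℝ S, ∀ y ∈ convexHull ℝ S, rdet x y ≤ k := by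
  have h1 : ∀ x ∈ convexHull ℝ S, ∀ y ∈ S, rdet x y ≤ k := by
    intro x hx y hy
    have : convexHull ℝ S ⊆ {x | rdet x y ≤ k} := by
      apply convexHull_min (fun z hz => hS z hz y hy)
      intro a ha b hb s t hs ht hst
      have ha' : rdet a y ≤ k := ha
      have hb' : rdet b y ≤ k := hb
      change rdet (s • a + t • b) y ≤ k
      simp only [rdet, Prod.fst_add, Prod.snd_add, Prod.smul_fst, Prod.smul_snd,
        smul_eq_mul] at ha' hb' ⊢
      obtain rfl : t = 1 - s := by linarith
      nlinarith
    exact this hx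
  intro x hx y hy
  have : convexHull ℝ S ⊆ {y | rdet x y ≤ k} := by
    apply convexHull_min (fun z hz => h1 x hx z hz)
    intro a ha b hb s t hs ht hst
    have ha' : rdet x a ≤ k := ha
    have hb' : rdet x b ≤ k := hb
    change rdet x (s • a + t • b) ≤ k
    simp only [rdet, Prod.fst_add, Prod.snd_add, Prod.smul_fst, Prod.smul_snd,
      smul_eq_mul] at ha' hb' ⊢
    obtain rfl : t = 1 - s := by linarith
    nlinarith
  exact this hy

/-- chord lengths at height `u` -/
def chords (K : Set (ℝ × ℝ)) (u : ℝ) : Set ℝ :=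
  {l | ∃ x y, (x, u) ∈ K ∧ (y, u) ∈ K ∧ l = x - y}

theorem width_facts (K : Set (ℝ × ℝ)) (hK : Convex ℝ K) (hsym : ∀ x ∈ K, -x ∈ K) (h k a : ℝ)
    (hh : 0 < h) (hdet : ∀ x ∈ K, ∀ y ∈ K, rdet x y ≤ k) (ha : (a, h) ∈ K) :
    ∃ L : ℝ → ℝ, AntitoneOn L (Set.Icc 0 h) ∧ (∀ u ∈ Set.Icc 0 h, 0 ≤ L u) ∧
      (∀ u ∈ Set.Icc 0 h, ∀ v ∈ Set.Icc 0 h, v * L u + u * L v ≤ 2 * k) ∧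
      (∀ u x y, (x, u) ∈ K → (y, u) ∈ K → x - y ≤ L u) := by
  have hsym2 : ∀ x u, (x, u) ∈ K → (-x, -u) ∈ K := fun x u hx => hsym _ hx
  have hbd : ∀ u, BddAbove (chords K u) := by
    intro u
    refine ⟨2 * k / h, ?_⟩
    rintro _ ⟨x, y, hx, hy, rfl⟩
    have h1 := hdet _ hx _ ha
    have h2 := hdet _ (hsym2 _ _ hy) _ ha
    simp only [rdet] at h1 h2
    rw [le_div_iff₀ hh]; linarith
  have hpt : ∀ u ∈ Set.Icc 0 h, (u / h * a, u) ∈ K := by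
    intro u hu
    have h1 : 0 ≤ u / h := div_nonneg hu.1 hh.le
    have h2 : u / h ≤ 1 := (div_le_one hh).2 hu.2
    have h3 := hK ha (hsym2 _ _ ha) (a := (1 + u / h) / 2) (b := (1 - u / h) / 2)
      (by linarith) (by linarith) (by ring)
    convert h3 using 1
    ext
    · simp; ring
    · simp; field_simp; ring
  have h0 : ∀ u ∈ Set.Icc 0 h, (0:ℝ) ∈ chords K u := fun u hu =>
    ⟨_, _, hpt u hu, hpt u hu, by ring⟩
  have hle : ∀ u x y, (x, u) ∈ K → (y, u) ∈ K → x - y ≤ sSup (chords K u) :=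
    fun u x y hx hy => le_csSup (hbd u) ⟨x, y, hx, hy, rfl⟩
  refine ⟨fun u => sSup (chords K u), ?_, fun u hu => le_csSup (hbd u) (h0 u hu), ?_, hle⟩
  · intro u hu v hv huv
    apply csSup_le ⟨_, h0 v hv⟩
    rintro _ ⟨x, y, hx, hy, rfl⟩
    rcases eq_or_lt_of_le hv.1 with hv0 | hv0
    · have : u = v := le_antisymm huv (by rw [← hv0]; exact hu.1)
      subst this
      exact hle _ _ _ hx hy
    have h1 : 0 ≤ u / v := div_nonneg hu.1 hv.1
    have h2 : u / v ≤ 1 := (div_le_one hv0).2 huv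
    have p1 := hK hx (hsym2 _ _ hy) (a := (1 + u / v) / 2) (b := (1 - u / v) / 2)
      (by linarith) (by linarith) (by ring)
    have p2 := hK hy (hsym2 _ _ hx) (a := (1 + u / v) / 2) (b := (1 - u / v) / 2)
      (by linarith) (by linarith) (by ring)
    have hy' : (1 + u / v) / 2 * v + (1 - u / v) / 2 * (-v) = u := by field_simp; ring
    simp only [Prod.smul_mk, Prod.mk_add_mk, smul_eq_mul, hy'] at p1 p2
    have := hle _ _ _ p1 p2
    calc x - y = _ := by ring
      _ ≤ _ := this
  · intro u hu v hv
    have main : ∀ l ∈ chords K u, ∀ l' ∈ chords K v, v * l + u * l' ≤ 2 * k := by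
      rintro _ ⟨x, y, hx, hy, rfl⟩ _ ⟨z, w, hz, hw, rfl⟩
      have h1 := hdet _ hx _ hw
      have h2 := hdet _ hz _ hy
      simp only [rdet] at h1 h2
      nlinarith
    have s1 : ∀ l ∈ chords K u, v * l + u * sSup (chords K v) ≤ 2 * k := by
      intro l hl
      rcases eq_or_lt_of_le hu.1 with hu0 | hu0
      · have := main l hl 0 (h0 v hv)
        rw [← hu0] at this ⊢; linarith
      · have : sSup (chords K v) ≤ (2 * k - v * l) / u := by
          apply csSup_le ⟨_, h0 v hv⟩
          intro l' hl'
          rw [le_div_iff₀ hu0]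
          linarith [main l hl l' hl']
        rw [le_div_iff₀ hu0] at this
        linarith
    rcases eq_or_lt_of_le hv.1 with hv0 | hv0
    · have := s1 0 (h0 u hu)
      rw [← hv0] at this ⊢; linarith
    · have : sSup (chords K u) ≤ (2 * k - u * sSup (chords K v)) / v := by
        apply csSup_le ⟨_, h0 u hu⟩
        intro l hl
        rw [le_div_iff₀ hv0]
        linarith [s1 l hl]
      rw [le_div_iff₀ hv0] at this
      linarith

theorem kNice_large_height_card_bound (h k : ℕ) (hh : 41020 ≤ h) (hk : h ≤ k)
    (Q : Set (ℤ × ℤ)) (hQ : IsKNice k Q) (hht : HeightEq Q h) :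
    Q.Finite ∧
      (Q.ncard : ℝ) ≤ (3264 * Real.pi / 10255) * k + (4946 / 3675) * h + 1 := by
  have hhpos : (0:ℝ) < h := by
    have : 0 < h := by omega
    exact_mod_cast this
  obtain ⟨hcop, hneg, hdet⟩ := hQ
  obtain ⟨hle, p0, hp0, hp0h⟩ := hht
  -- finiteness
  have hfin : Q.Finite := by
    apply Set.Finite.subset (Set.finite_Icc
      ((-(k + |p0.1| * h : ℤ), -(h : ℤ)) : ℤ × ℤ) ((k + |p0.1| * h : ℤ), (h : ℤ)))
    intro p hp
    have h1 := hle p hp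
    have h2 := hdet p hp p0 hp0
    have h3 : |p.1| ≤ k + |p0.1| * h := by
      have e1 : p.1 * p0.2 = (p.1 * p0.2 - p0.1 * p.2) + p0.1 * p.2 := by ring
      have e2 : |p.1| * h ≤ k + |p0.1| * |p.2| := by
        rw [← hp0h, ← abs_mul, ← abs_mul]
        conv_lhs => rw [e1]
        exact (abs_add_le _ _).trans (by linarith)
      have e3 : |p0.1| * |p.2| ≤ |p0.1| * h := mul_le_mul_of_nonneg_left h1 (abs_nonneg _)
      have e4 : |p.1| * 1 ≤ |p.1| * h :=
        mul_le_mul_of_nonneg_left (by exact_mod_cast (by omega : 1 ≤ h)) (abs_nonneg _)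
      linarith
    have h4 := abs_le.1 h3
    have h5 := abs_le.1 h1
    exact ⟨⟨h4.1, h5.1⟩, ⟨h4.2, h5.2⟩⟩
  refine ⟨hfin, ?_⟩
  -- the convex body
  set S : Set (ℝ × ℝ) := {x | ∃ p ∈ Q, x = ((p.1 : ℝ), (p.2 : ℝ)) ∨ x = (-(p.1 : ℝ), -(p.2 : ℝ))}
    with hSdef
  set K := convexHull ℝ S with hKdef
  have hSK : S ⊆ K := subset_convexHull ℝ S
  have hSsym : ∀ x ∈ S, -x ∈ S := by
    rintro x ⟨p, hp, rfl | rfl⟩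
    · exact ⟨p, hp, Or.inr rfl⟩
    · exact ⟨p, hp, Or.inl (by simp)⟩
  have hKsym : ∀ x ∈ K, -x ∈ K := by
    have hS2 : -S = S := by
      ext x
      exact ⟨fun hx => by simpa using hSsym _ hx, fun hx => hSsym _ hx⟩
    intro x hx
    have : -x ∈ -K := by simpa using hx
    rwa [hKdef, ← convexHull_neg, hS2] at this
  have hSdet : ∀ x ∈ S, ∀ y ∈ S, rdet x y ≤ k := by
    have hd : ∀ p ∈ Q, ∀ q ∈ Q, |(p.1 : ℝ) * q.2 - q.1 * p.2| ≤ k := by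
      intro p hp q hq
      exact_mod_cast hdet p hp q hq
    rintro x ⟨p, hp, rfl | rfl⟩ y ⟨q, hq, rfl | rfl⟩ <;>
    · have := abs_le.1 (hd p hp q hq)
      simp only [rdet]
      linarith [this.1, this.2]
  have hKdet := rdet_hull S k hSdet
  have hsig : ∃ a : ℝ, (a, (h : ℝ)) ∈ K := by
    rcases abs_eq (by positivity : (0:ℤ) ≤ h) |>.1 hp0h with h1 | h1
    · refine ⟨p0.1, hSK ⟨p0, hp0, Or.inl ?_⟩⟩
      rw [h1]; simp
    · refine ⟨-p0.1, hSK ⟨p0, hp0, Or.inr ?_⟩⟩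
      rw [h1]; simp
  obtain ⟨a, ha⟩ := hsig
  obtain ⟨L, hLanti, hL0, hLin, hLK⟩ :=
    width_facts K (convex_convexHull ℝ S) hKsym h k a hhpos hKdet ha
  have hint := integral_bound L h k hhpos hLanti hLin
  have hsumL : ∑ i ∈ Finset.range h, L ((i + 1 : ℕ) : ℝ) ≤ Real.pi * k / 2 := by
    have := AntitoneOn.sum_le_integral (f := L) (x₀ := 0) (a := h) (by simpa using hLanti)
    simp only [zero_add] at this
    linarith
  -- rows
  classical
  set σ : ℤ × ℤ → ℤ × ℤ := fun p => if p.2 < 0 then -p else p with hσ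
  set T : Finset (ℤ × ℤ) := hfin.toFinset.image σ with hT
  have hcard : Q.ncard = T.card := by
    rw [Set.ncard_eq_toFinset_card Q hfin, hT, Finset.card_image_of_injOn]
    intro p hp q hq hpq
    have hp' : p ∈ Q := by simpa using hp
    have hq' : q ∈ Q := by simpa using hq
    simp only [hσ] at hpq
    split_ifs at hpq
    · exact neg_injective hpq
    · exact absurd (hpq ▸ hq') (hneg p hp')
    · exact absurd (hpq ▸ hp') (hneg q hq')
    · exact hpq
  have hTmem : ∀ p ∈ T, 0 ≤ p.2 ∧ p.2 ≤ h ∧ Int.gcd p.1 p.2 = 1 ∧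
      ((p.1 : ℝ), (p.2 : ℝ)) ∈ K ∧ (p.2 = 0 → p ∈ Q) := by
    intro p hp
    obtain ⟨q, hq, rfl⟩ := Finset.mem_image.1 hp
    have hq' : q ∈ Q := by simpa using hq
    have h1 := abs_le.1 (hle q hq')
    simp only [hσ]
    split_ifs with h2
    · refine ⟨?_, ?_, ?_, hSK ⟨q, hq', Or.inr ?_⟩, ?_⟩
      · simp; omega
      · simp; omega
      · simpa using (hcop q hq').2
      · simp
      · intro h3; simp at h3; omega
    · exact ⟨by omega, h1.2, (hcop q hq').2, hSK ⟨q, hq', Or.inl rfl⟩, fun _ => hq'⟩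
  have hfib : T.card = ∑ n ∈ Finset.range (h + 1), (T.filter (fun p => p.2.toNat = n)).card := by
    apply Finset.card_eq_sum_card_fiberwise
    intro p hp
    have := hTmem p hp
    simp
    omega
  have hrow0 : (T.filter (fun p => p.2.toNat = 0)).card ≤ 1 := by
    rw [Finset.card_le_one]
    have aux : ∀ p ∈ T.filter (fun p => p.2.toNat = 0), p ∈ Q ∧ (p = (1, 0) ∨ p = (-1, 0)) := by
      intro p hp
      obtain ⟨hp1, hp2⟩ := Finset.mem_filter.1 hp
      obtain ⟨h1, h2, h3, h4, h5⟩ := hTmem p hp1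
      have h6 : p.2 = 0 := by omega
      refine ⟨h5 h6, ?_⟩
      rw [h6, Int.gcd_zero_right] at h3
      rcases Int.natAbs_eq_iff.1 h3 with h7 | h7
      · left; ext <;> simp [h6, h7]
      · right; ext <;> simp [h6, h7]
    intro p hp q hq
    obtain ⟨hpQ, hp'⟩ := aux p hp
    obtain ⟨hqQ, hq'⟩ := aux q hq
    have hn := hneg p hpQ
    rcases hp' with rfl | rfl <;> rcases hq' with rfl | rfl
    · rfl
    · exact absurd hqQ (by simpa using hn)
    · exact absurd hqQ (by simpa using hn)
    · rfl
  have hrow : ∀ i ∈ Finset.range h, 210 * ((T.filter (fun p => p.2.toNat = i + 1)).card : ℝ)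
      ≤ cTab (Nat.gcd (i + 1) 210) * L ((i + 1 : ℕ) : ℝ) + eTab (Nat.gcd (i + 1) 210) := by
    intro i hi
    have hi' : i + 1 ≤ h := by simpa using hi
    have hmem : ∀ p ∈ T.filter (fun p => p.2.toNat = i + 1), p.2 = ((i + 1 : ℕ) : ℤ) ∧
        Int.gcd p.1 p.2 = 1 ∧ ((p.1 : ℝ), (p.2 : ℝ)) ∈ K := by
      intro p hp
      obtain ⟨hp1, hp2⟩ := Finset.mem_filter.1 hp
      obtain ⟨h1, h2, h3, h4, h5⟩ := hTmem p hp1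
      exact ⟨by omega, h3, h4⟩
    have hc : (T.filter (fun p => p.2.toNat = i + 1)).card
        = ((T.filter (fun p => p.2.toNat = i + 1)).image Prod.fst).card := by
      rw [Finset.card_image_of_injOn]
      intro p hp q hq hpq
      exact Prod.ext hpq ((hmem p hp).1.trans (hmem q hq).1.symm)
    rw [hc]
    apply card_row
    · exact Nat.mem_divisors.2 ⟨Nat.gcd_dvd_right _ _, by norm_num⟩
    · exact hL0 _ ⟨by positivity, by exact_mod_cast hi'⟩
    · intro m hm
      obtain ⟨p, hp, rfl⟩ := Finset.mem_image.1 hm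
      obtain ⟨h1, h2, h3⟩ := hmem p hp
      rw [h1] at h2
      have h4 : IsCoprime p.1 ((i + 1 : ℕ) : ℤ) := Int.isCoprime_iff_gcd_eq_one.2 h2
      apply Int.isCoprime_iff_gcd_eq_one.1
      apply h4.of_isCoprime_of_dvd_right
      exact_mod_cast Nat.gcd_dvd_left _ _
    · intro m hm m' hm'
      obtain ⟨p, hp, rfl⟩ := Finset.mem_image.1 hm
      obtain ⟨q, hq, rfl⟩ := Finset.mem_image.1 hm'
      obtain ⟨h1, h2, h3⟩ := hmem p hp
      obtain ⟨h1', h2', h3'⟩ := hmem q hq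
      rw [h1] at h3
      rw [h1'] at h3'
      exact hLK _ _ _ (by exact_mod_cast h3') (by exact_mod_cast h3)
  -- Abel summation
  have hL1 : h * L 0 ≤ 2 * k := by
    have := hLin 0 ⟨le_rfl, hhpos.le⟩ h ⟨hhpos.le, le_rfl⟩
    linarith
  have habel : ∑ i ∈ Finset.range h,
      ((cTab (Nat.gcd (i + 1) 210) : ℝ) - 27648 / 210) * L ((i + 1 : ℕ) : ℝ) ≤ 210 * L 0 := by
    obtain ⟨N, rfl⟩ : ∃ N, h = N + 1 := ⟨h - 1, by omega⟩
    have h1 := abel_bound (fun i => (cTab (Nat.gcd (i + 1) 210) : ℝ) - 27648 / 210)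
      (fun i => L ((i + 1 : ℕ) : ℝ)) 210 ?_ N ?_ ?_
    · refine h1.trans ?_
      have : L ((0 + 1 : ℕ) : ℝ) ≤ L 0 := by
        apply hLanti ⟨le_rfl, hhpos.le⟩ ⟨by positivity, ?_⟩ (by positivity)
        exact_mod_cast (by omega : 0 + 1 ≤ N + 1)
      linarith
    · intro M
      have h2 : (210 : ℝ) * ∑ i ∈ Finset.range M, (cTab (Nat.gcd (i + 1) 210) : ℝ)
          ≤ 27648 * M + 44100 := by exact_mod_cast sum_c M
      rw [Finset.sum_sub_distrib]
      simp only [Finset.sum_const, Finset.card_range, nsmul_eq_mul]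
      linarith
    · intro i hi
      apply hLanti
      · exact ⟨by positivity, by exact_mod_cast (by omega : i + 1 ≤ N + 1)⟩
      · exact ⟨by positivity, by exact_mod_cast (by omega : i + 1 + 1 ≤ N + 1)⟩
      · exact_mod_cast (by omega : i + 1 ≤ i + 1 + 1)
    · exact hL0 _ ⟨by positivity, le_rfl⟩
  have hesum : (210 : ℝ) * ∑ i ∈ Finset.range h, (eTab (Nat.gcd (i + 1) 210) : ℝ)
      ≤ 59352 * h := by exact_mod_cast sum_e h
  have hsum := Finset.sum_le_sum hrow
  rw [← Finset.mul_sum, Finset.sum_add_distrib] at hsum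
  simp only [sub_mul] at habel
  rw [Finset.sum_sub_distrib, ← Finset.mul_sum] at habel
  have htot : (Q.ncard : ℝ)
      ≤ ∑ i ∈ Finset.range h, ((T.filter (fun p => p.2.toNat = i + 1)).card : ℝ) + 1 := by
    rw [hcard, hfib, Finset.sum_range_succ']
    push_cast
    have : ((T.filter (fun p => p.2.toNat = 0)).card : ℝ) ≤ 1 := by exact_mod_cast hrow0
    linarith
  have hpi := Real.pi_gt_three
  have hh' : (41020 : ℝ) ≤ h := by exact_mod_cast hh
  have hL00 : 0 ≤ L 0 := hL0 0 ⟨le_rfl, hhpos.le⟩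
  have hL2 : 41020 * L 0 ≤ 2 * k := by nlinarith
  have hk0 : (0 : ℝ) ≤ k := Nat.cast_nonneg k
  have hkp : 3 * (k : ℝ) ≤ Real.pi * k := by nlinarith
  linarith
end

section
/- For every k ∈ ℕ and every k-nice set Q ⊆ ℤ², there exists a k-nice set equivalent to Q whose height is at most √(2k). -/
/-- Application of an integer `2 × 2` matrix to a pair of integers. -/
def matApply (A : Matrix (Fin 2) (Fin 2) ℤ) (p : ℤ × ℤ) : ℤ × ℤ :=
  (A 0 0 * p.1 + A 0 1 * p.2, A 1 0 * p.1 + A 1 1 * p.2)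

/-- `Q` and `Q'` are equivalent if `Q'` is obtained from `A • Q`, for some unimodular
integer matrix `A`, by negating a subset of its elements. -/
def EquivSets (Q Q' : Set (ℤ × ℤ)) : Prop :=
  ∃ A : Matrix (Fin 2) (Fin 2) ℤ, |A.det| = 1 ∧
    ∃ f : ℤ × ℤ → ℤ × ℤ, (∀ x, f x = x ∨ f x = -x) ∧
      Q' = f '' (matApply A '' Q)

/-- Pigeonhole step: a short vector in the lattice `B ≡ r A (mod d)`. -/
lemma short_vec (d N : ℕ) (hd : 0 < d) (hN : 2 * d < (N + 1) * (N + 1)) (r : ℤ) :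
    ∃ A B : ℤ, (A ≠ 0 ∨ B ≠ 0) ∧ (d : ℤ) ∣ B - r * A ∧ |A| + |B| ≤ N := by
  have : NeZero d := ⟨hd.ne'⟩
  let φ : Fin (N + 1) × Fin (N + 1) → ZMod 2 × ZMod d := fun p =>
    (((((p.1 : ℕ) : ℤ) - ((p.2 : ℕ) : ℤ) : ℤ) : ZMod 2),
     (((((p.1 : ℕ) : ℤ) - ((p.2 : ℕ) : ℤ)) / 2 -
        r * ((((p.1 : ℕ) : ℤ) + ((p.2 : ℕ) : ℤ)) / 2) : ℤ) : ZMod d))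
  have hcard : Fintype.card (ZMod 2 × ZMod d) < Fintype.card (Fin (N + 1) × Fin (N + 1)) := by
    simp only [Fintype.card_prod, ZMod.card, Fintype.card_fin]
    exact hN
  obtain ⟨⟨x, y⟩, ⟨x', y'⟩, hne, he⟩ := Fintype.exists_ne_map_eq_of_card_lt φ hcard
  simp only [φ, Prod.mk.injEq] at he
  obtain ⟨h1, h2⟩ := he
  rw [ZMod.intCast_eq_intCast_iff_dvd_sub] at h1 h2
  have hne' : ¬ (((x : ℕ) : ℤ) = x' ∧ ((y : ℕ) : ℤ) = y') := by
    rintro ⟨ha, hb⟩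
    apply hne
    ext
    · exact_mod_cast ha
    · exact_mod_cast hb
  have hx := x.2
  have hy := y.2
  have hx' := x'.2
  have hy' := y'.2
  generalize (x : ℕ) = a at *
  generalize (y : ℕ) = b at *
  generalize (x' : ℕ) = a' at *
  generalize (y' : ℕ) = b' at *
  refine ⟨((a' : ℤ) + b') / 2 - ((a : ℤ) + b) / 2, ((a' : ℤ) - b') / 2 - ((a : ℤ) - b) / 2,
    ?_, ?_, ?_⟩
  · omega
  · convert h2 using 1
    ring
  · push_cast at h1
    simp only [Int.abs_eq_natAbs]
    omega

/-- A coprime linear form that is small on `Q`. -/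
lemma small_form (k : ℕ) (Q : Set (ℤ × ℤ)) (hQ : IsKNice k Q) :
    ∃ a b : ℤ, IsCoprime a b ∧ ∀ q ∈ Q, (a * q.2 - b * q.1) ^ 2 ≤ 2 * (k : ℤ) := by
  obtain ⟨hc, -, hk⟩ := hQ
  rcases Q.eq_empty_or_nonempty with rfl | ⟨q0, hq0⟩
  · exact ⟨1, 0, isCoprime_one_left, by simp⟩
  let P : ℕ → Prop := fun d => ∃ p ∈ Q, ∃ q ∈ Q, (p.1 * q.2 - q.1 * p.2).natAbs = d
  classical
  have hbd : ∀ d, P d → d ≤ k := by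
    rintro d ⟨p, hp, q, hq, rfl⟩
    have := hk p hp q hq
    rw [Int.abs_eq_natAbs] at this
    omega
  have hP0 : P 0 := ⟨q0, hq0, q0, hq0, by simp⟩
  have hmax := Nat.findGreatest_spec (P := P) (Nat.zero_le k) hP0
  have hle : ∀ p ∈ Q, ∀ q ∈ Q,
      (p.1 * q.2 - q.1 * p.2).natAbs ≤ Nat.findGreatest P k := fun p hp q hq =>
    Nat.le_findGreatest (hbd _ ⟨p, hp, q, hq, rfl⟩) ⟨p, hp, q, hq, rfl⟩
  generalize Nat.findGreatest P k = d at hmax hle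
  have hdk := hbd d hmax
  obtain ⟨p, hp, q, hq, hd⟩ := hmax
  rcases Nat.eq_zero_or_pos d with h0 | hpos
  · refine ⟨p.1, p.2, Int.isCoprime_iff_gcd_eq_one.2 (hc p hp).2, fun s hs => ?_⟩
    have := hle p hp s hs
    have h2 : p.1 * s.2 - p.2 * s.1 = 0 := by
      rw [mul_comm p.2]; omega
    rw [h2]; positivity
  obtain ⟨s, t, hst⟩ := Int.isCoprime_iff_gcd_eq_one.2 (hc p hp).2
  -- the vector `u = (t, -s)` has determinant one with `p`
  obtain ⟨A, B, hAB, hdvd, hN⟩ := short_vec d (Nat.sqrt (2 * d)) hpos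
    (Nat.lt_succ_sqrt _) (t * q.2 + s * q.1)
  have hdvd' : (p.1 * q.2 - q.1 * p.2) ∣ B - (t * q.2 + s * q.1) * A := by
    rw [← Int.natAbs_dvd, hd]; exact hdvd
  obtain ⟨x, hx⟩ := hdvd'
  have e1 : (A * t + x * p.1) * p.2 - (-(A * s) + x * p.2) * p.1 = A := by
    linear_combination A * hst
  have e2 : (A * t + x * p.1) * q.2 - (-(A * s) + x * p.2) * q.1 = B := by
    linear_combination -hx
  generalize A * t + x * p.1 = v at e1 e2
  generalize -(A * s) + x * p.2 = w at e1 e2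
  have hsq : ((Nat.sqrt (2 * d) : ℕ) : ℤ) ^ 2 ≤ 2 * (k : ℤ) := by
    have := Nat.sqrt_le' (2 * d)
    have h3 : (Nat.sqrt (2 * d)) ^ 2 ≤ 2 * k := by omega
    exact_mod_cast h3
  have hall : ∀ z ∈ Q, |v * z.2 - w * z.1| ≤ Nat.sqrt (2 * d) := by
    intro z hz
    have i1 : |z.1 * q.2 - q.1 * z.2| ≤ (d : ℤ) := by
      have := hle z hz q hq
      rw [Int.abs_eq_natAbs]; omega
    have i2 : |p.1 * z.2 - z.1 * p.2| ≤ (d : ℤ) := by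
      have := hle p hp z hz
      rw [Int.abs_eq_natAbs]; omega
    have hD : |p.1 * q.2 - q.1 * p.2| = (d : ℤ) := by rw [Int.abs_eq_natAbs, hd]
    have key : (p.1 * q.2 - q.1 * p.2) * (v * z.2 - w * z.1)
        = (z.1 * q.2 - q.1 * z.2) * A + (p.1 * z.2 - z.1 * p.2) * B := by
      rw [← e1, ← e2]; ring
    have hd0 : (0 : ℤ) < d := by exact_mod_cast hpos
    have : (d : ℤ) * |v * z.2 - w * z.1| ≤ d * Nat.sqrt (2 * d) := by
      calc (d : ℤ) * |v * z.2 - w * z.1|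
          = |(z.1 * q.2 - q.1 * z.2) * A + (p.1 * z.2 - z.1 * p.2) * B| := by
            rw [← key, abs_mul, hD]
        _ ≤ |z.1 * q.2 - q.1 * z.2| * |A| + |p.1 * z.2 - z.1 * p.2| * |B| := by
            rw [← abs_mul, ← abs_mul]; exact abs_add_le _ _
        _ ≤ d * |A| + d * |B| := by gcongr
        _ = d * (|A| + |B|) := by ring
        _ ≤ _ := by gcongr
    exact le_of_mul_le_mul_left this hd0
  have hvw : 0 < Int.gcd v w := by
    rw [Int.gcd_pos_iff]
    by_contra hcon
    push Not at hcon
    obtain ⟨rfl, rfl⟩ := hcon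
    simp at e1 e2
    rcases hAB with h | h
    · exact h e1.symm
    · exact h e2.symm
  obtain ⟨v', w', hg, hv, hw⟩ := Int.exists_gcd_one hvw
  refine ⟨v', w', Int.isCoprime_iff_gcd_eq_one.2 hg, fun z hz => ?_⟩
  have h4 := hall z hz
  have h5 : v * z.2 - w * z.1 = (v' * z.2 - w' * z.1) * (Int.gcd v w : ℤ) := by
    linear_combination z.2 * hv - z.1 * hw
  have h6 : |v' * z.2 - w' * z.1| ≤ Nat.sqrt (2 * d) := by
    refine le_trans ?_ h4
    rw [h5, abs_mul]
    apply le_mul_of_one_le_right (abs_nonneg _)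
    rw [Nat.abs_cast]
    exact_mod_cast hvw
  exact (sq_le_sq' (abs_le.1 h6).1 (abs_le.1 h6).2).trans hsq

theorem exists_equiv_height_le_sqrt_two_k (k : ℕ) (Q : Set (ℤ × ℤ))
    (hQ : IsKNice k Q) :
    ∃ Q' : Set (ℤ × ℤ), EquivSets Q Q' ∧ IsKNice k Q' ∧
      ∀ p ∈ Q', ((|p.2| : ℤ) : ℝ) ≤ Real.sqrt (2 * k) := by
  obtain ⟨a, b, ⟨s, t, hst⟩, hsmall⟩ := small_form k Q hQ
  obtain ⟨hc, hn, hk⟩ := hQ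
  have happ : ∀ p, matApply !![s, t; -b, a] p = (s * p.1 + t * p.2, -b * p.1 + a * p.2) := by
    intro p; simp [matApply]
  refine ⟨matApply !![s, t; -b, a] '' Q, ⟨!![s, t; -b, a], ?_, id, fun x => Or.inl rfl, by simp⟩,
    ⟨?_, ?_, ?_⟩, ?_⟩
  · rw [Matrix.det_fin_two_of, show s * a - t * -b = 1 by linear_combination hst]; simp
  · rintro _ ⟨p, hp, rfl⟩
    rw [happ]
    obtain ⟨x, y, hxy⟩ := Int.isCoprime_iff_gcd_eq_one.2 (hc p hp).2
    have hcop : IsCoprime (s * p.1 + t * p.2) (-b * p.1 + a * p.2) :=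
      ⟨x * a + y * b, y * s - x * t, by linear_combination (x * p.1 + y * p.2) * hst + hxy⟩
    refine ⟨fun h => ?_, Int.isCoprime_iff_gcd_eq_one.1 hcop⟩
    rw [Prod.mk.injEq] at h
    rw [h.1, h.2] at hcop
    exact not_isCoprime_zero_zero hcop
  · rintro _ ⟨p, hp, rfl⟩ ⟨q, hq, h⟩
    rw [happ, happ, Prod.neg_mk, Prod.mk.injEq] at h
    apply hn p hp
    have : q = -p := by
      ext
      · simp only [Prod.fst_neg]
        linear_combination a * h.1 - t * h.2 - (q.1 + p.1) * hst
      · simp only [Prod.snd_neg]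
        linear_combination b * h.1 + s * h.2 - (q.2 + p.2) * hst
    rw [← this]; exact hq
  · rintro _ ⟨p, hp, rfl⟩ _ ⟨q, hq, rfl⟩
    rw [happ, happ]
    convert hk p hp q hq using 2
    linear_combination (p.1 * q.2 - q.1 * p.2) * hst
  · rintro _ ⟨p, hp, rfl⟩
    rw [happ]
    apply Real.le_sqrt_of_sq_le
    have h := hsmall p hp
    have h2 : |-b * p.1 + a * p.2| ^ 2 ≤ 2 * (k : ℤ) := by
      rw [sq_abs]
      convert h using 2
      ring
    exact_mod_cast h2
end

section
/- For every integer k ≥ 3225, there exists a k-nice set Q ⊆ ℤ² of height at most three such that every k-nice set has cardinality at most the cardinality of Q (i.e., Q is a k-nice set of maximum size). -/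
namespace KNice

/-- Packed table of the totient function for arguments at most 210 (one byte each). -/
def packP : ℕ := 2617958008202739867566949757320205344443843058342417762571824014353623761040446661809306106385414091871715831127131957650991295511929834664598752412180447424034583670803539572686725906384952475087374502278676222305080180133665923773237773400611814716535780209260959420188050306029282853973420734244576878514599368859214891789303405487479091889818806002336109751402014802971342450037525286029942120356084612303518031754514986972529519931791290225351691102979238823697006274421370617591878524390377349303042304

/-- Packed table of the discrepancy numerators for arguments at most 210 (two bytes each). -/
def packD : ℕ := 1837591905941249072244919541215165342374192132484383276964195867121457560179961090986809633975179094506524269647653738900909119936452183363927957648609739255802822467398278728412040313714858084319855775384862089138885403897896131477415992618830943344532314549743555262735409696394674231486090317999382898440989141909375082509505661131112084793310855268044218347821206637280806447343331903424959155225860940727258981601103758697246972256425356379878180958497423272192186613901622503347065182049981732040000014904385825687899629466621080561845100913861481279627573573963597527610227131485359343650427173077883840897175182205028742996511102897816245784591595483497227218120903023926915991442325967654595458326847185485763953906102040724188397511949925920756661881484720159479360031549632785229131519451228121414821473634352453239334012368155126140547403537473571502506340105925324282936340212350943320381068974841830694089531389001140478386846622654417444146498070871536383231855716797638305022788825156973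772757073920

def tP (n : ℕ) : ℕ := (packP >>> (8 * n)) % 256

def tD (n : ℕ) : ℕ := (packD >>> (16 * n)) % 65536

def scale : ℕ := 10000000

/-- scaled weight of a row, rounded up -/
def rowW (n : ℕ) : ℕ := (scale * tP n + n - 1) / n

/-- scaled error of a row, rounded up -/
def rowX (n : ℕ) : ℕ := (scale * tD n + n - 1) / n

def sumX : ℕ → ℕ
  | 0 => 0
  | n + 1 => sumX n + rowX (n + 1)

/-- greedy verification of the dual certificate with budget `T` -/
def chk (W : ℕ → ℕ) : ℕ → ℕ → ℕ → ℕ → ℕ → ℕ → Bool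
  | 0, _, _, _, _, _ => false
  | f + 1, a, b, ra, rb, T =>
    bif Nat.blt a b then
      bif Nat.ble (ra * a) (rb * b) then
        Nat.ble ((ra + b - 1) / b) T &&
          chk W f (a + 1) b (bif Nat.blt (a + 1) b then W (a + 1) else 0)
            (rb - (ra + b - 1) / b * a) (T - (ra + b - 1) / b)
      else
        Nat.ble ((rb + a - 1) / a) T &&
          chk W f a (b - 1) (ra - (rb + a - 1) / a * b)
            (bif Nat.blt a (b - 1) then W (b - 1) else 0) (T - (rb + a - 1) / a)
    else Nat.beq a b && Nat.ble (ra + rb) (2 * a * T)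

def kmin (h : ℕ) : ℕ := bif Nat.ble 3225 ((2 * h * (h - 3) + 2) / 3) then
  (2 * h * (h - 3) + 2) / 3 else 3225

def budget (h : ℕ) : ℕ := (scale * (kmin h + 2) - 1 - sumX h) / (2 * kmin h)

def good (h : ℕ) : Bool :=
  Nat.ble (2 * budget h) scale && Nat.ble (sumX h + 1) (scale * (kmin h + 2)) &&
    chk rowW (h + 1) 1 h (rowW 1) (rowW h) (budget h)

def goodFrom : ℕ → Bool
  | 0 => true
  | n + 1 => good (n + 4) && goodFrom n

theorem goodFrom_all : goodFrom 197 = true := by decide +kernel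

/-- running data: count of coprime residues, maximum and minimum of the discrepancy -/
def scan (d P : ℕ) : ℕ → ℕ × ℕ × ℕ
  | 0 => (0, d * P, d * P)
  | x + 1 =>
    match scan d P x with
    | (F, mx, mn) =>
      bif Nat.beq (Nat.gcd d x) 1 then
        (F + 1, max mx (d * (F + 1) + P * (d - (x + 1))), min mn (d * (F + 1) + P * (d - (x + 1))))
      else (F, max mx (d * F + P * (d - (x + 1))), min mn (d * F + P * (d - (x + 1))))

def tabOk (d : ℕ) : Bool :=
  match scan d (tP d) d with
  | (F, mx, mn) => Nat.beq F (tP d) && Nat.ble (mx + tP d) (mn + tD d)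

def tabFrom : ℕ → Bool
  | 0 => true
  | n + 1 => tabOk (n + 1) && tabFrom n

theorem tabFrom_all : tabFrom 210 = true := by decide +kernel

theorem le_ceil_mul (x b : ℕ) (hb : 1 ≤ b) : x ≤ (x + b - 1) / b * b := by
  have h1 := Nat.div_add_mod (x + b - 1) b
  have h2 := Nat.mod_lt (x + b - 1) hb
  rw [mul_comm] at h1
  omega

theorem chk_sound (W L : ℕ → ℕ) (k h : ℕ)
    (hL : ∀ a b, 1 ≤ a → a ≤ h → 1 ≤ b → b ≤ h → b * L a + a * L b ≤ 2 * k) :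
    ∀ f a b ra rb T, 1 ≤ a → a ≤ h → 1 ≤ b → b ≤ h → chk W f a b ra rb T = true →
      ra * L a + rb * L b + ∑ n ∈ Finset.Ioo a b, W n * L n ≤ 2 * k * T := by
  intro f
  induction f with
  | zero => intro a b ra rb T _ _ _ _ h; simp [chk] at h
  | succ f ih =>
    intro a b ra rb T ha1 ha2 hb1 hb2 hc
    rw [chk] at hc
    by_cases hab : a < b
    · have e1 : Nat.blt a b = true := by simpa [Nat.blt_eq] using hab
      rw [e1, cond_true] at hc
      have hlab := hL a b ha1 ha2 hb1 hb2
      by_cases hr : Nat.ble (ra * a) (rb * b) = true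
      · rw [hr, cond_true, Bool.and_eq_true] at hc
        obtain ⟨hy, hc⟩ := hc
        rw [Nat.ble_eq] at hy
        have hyb : ra ≤ (ra + b - 1) / b * b := le_ceil_mul ra b hb1
        generalize (ra + b - 1) / b = y at *
        have := ih (a + 1) b _ _ _ (by omega) (by omega) hb1 hb2 hc
        obtain ⟨T', rfl⟩ := Nat.exists_eq_add_of_le hy
        rw [Nat.add_sub_cancel_left] at this
        have hrb : rb ≤ (rb - y * a) + y * a := by omega
        generalize rb - y * a = rb' at *
        have key : ra * L a + rb * L b ≤ y * (2 * k) + rb' * L b := by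
          calc ra * L a + rb * L b ≤ (y * b) * L a + (rb' + y * a) * L b := by gcongr
            _ = y * (b * L a + a * L b) + rb' * L b := by ring
            _ ≤ _ := by gcongr
        have hs : ∑ n ∈ Finset.Ioo a b, W n * L n =
            (bif Nat.blt (a + 1) b then W (a + 1) else 0) * L (a + 1) +
              ∑ n ∈ Finset.Ioo (a + 1) b, W n * L n := by
          by_cases h2 : a + 1 < b
          · have e2 : Nat.blt (a + 1) b = true := by simpa [Nat.blt_eq] using h2
            rw [e2, cond_true]
            have : Finset.Ioo a b = insert (a + 1) (Finset.Ioo (a + 1) b) := by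
              ext n; simp only [Finset.mem_Ioo, Finset.mem_insert]; omega
            rw [this, Finset.sum_insert (by simp)]
          · have e2 : Nat.blt (a + 1) b = false := by
              rw [← Bool.not_eq_true, Nat.blt_eq]; exact h2
            rw [e2, cond_false]
            have e3 : Finset.Ioo a b = ∅ := by ext n; simp; omega
            have e4 : Finset.Ioo (a + 1) b = ∅ := by ext n; simp; omega
            rw [e3, e4]; simp
        rw [hs]
        nlinarith
      · rw [Bool.not_eq_true] at hr
        rw [hr, cond_false, Bool.and_eq_true] at hc
        obtain ⟨hy, hc⟩ := hc
        rw [Nat.ble_eq] at hy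
        have hyb : rb ≤ (rb + a - 1) / a * a := le_ceil_mul rb a ha1
        generalize (rb + a - 1) / a = y at *
        have := ih a (b - 1) _ _ _ ha1 ha2 (by omega) (by omega) hc
        obtain ⟨T', rfl⟩ := Nat.exists_eq_add_of_le hy
        rw [Nat.add_sub_cancel_left] at this
        have hrb : ra ≤ (ra - y * b) + y * b := by omega
        generalize ra - y * b = ra' at *
        have key : ra * L a + rb * L b ≤ y * (2 * k) + ra' * L a := by
          calc ra * L a + rb * L b ≤ (ra' + y * b) * L a + (y * a) * L b := by gcongr
            _ = y * (b * L a + a * L b) + ra' * L a := by ring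
            _ ≤ _ := by gcongr
        have hs : ∑ n ∈ Finset.Ioo a b, W n * L n =
            (bif Nat.blt a (b - 1) then W (b - 1) else 0) * L (b - 1) +
              ∑ n ∈ Finset.Ioo a (b - 1), W n * L n := by
          by_cases h2 : a < b - 1
          · have e2 : Nat.blt a (b - 1) = true := by simpa [Nat.blt_eq] using h2
            rw [e2, cond_true]
            have : Finset.Ioo a b = insert (b - 1) (Finset.Ioo a (b - 1)) := by
              ext n; simp only [Finset.mem_Ioo, Finset.mem_insert]; omega
            rw [this, Finset.sum_insert (by simp)]
          · have e2 : Nat.blt a (b - 1) = false := by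
              rw [← Bool.not_eq_true, Nat.blt_eq]; exact h2
            rw [e2, cond_false]
            have e3 : Finset.Ioo a b = ∅ := by ext n; simp; omega
            have e4 : Finset.Ioo a (b - 1) = ∅ := by ext n; simp; omega
            rw [e3, e4]; simp
        rw [hs]
        nlinarith
    · have e1 : Nat.blt a b = false := by
        rw [← Bool.not_eq_true, Nat.blt_eq]; exact hab
      rw [e1, cond_false, Bool.and_eq_true, Nat.beq_eq, Nat.ble_eq] at hc
      obtain ⟨rfl, hc⟩ := hc
      have := hL a a ha1 ha2 ha1 ha2
      simp only [Finset.Ioo_self, Finset.sum_empty, add_zero]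
      calc ra * L a + rb * L a = (ra + rb) * L a := by ring
        _ ≤ (2 * a * T) * L a := by gcongr
        _ = T * (a * L a + a * L a) := by ring
        _ ≤ T * (2 * k) := by gcongr
        _ = _ := by ring

theorem goodFrom_spec : ∀ n, goodFrom n = true → ∀ h, 4 ≤ h → h < n + 4 → good h = true := by
  intro n
  induction n with
  | zero => intro _ h _ _; omega
  | succ n ih =>
    intro hn h h1 h2
    rw [goodFrom, Bool.and_eq_true] at hn
    by_cases e : h = n + 4
    · rw [e]; exact hn.1
    · exact ih hn.2 h h1 (by omega)

theorem tabFrom_spec : ∀ n, tabFrom n = true → ∀ d, 1 ≤ d → d ≤ n → tabOk d = true := by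
  intro n
  induction n with
  | zero => intro _ h _ _; omega
  | succ n ih =>
    intro hn h h1 h2
    rw [tabFrom, Bool.and_eq_true] at hn
    by_cases e : h = n + 1
    · rw [e]; exact hn.1
    · exact ih hn.2 h h1 (by omega)

theorem sumX_eq (h : ℕ) : sumX h = ∑ n ∈ Finset.Icc 1 h, rowX n := by
  induction h with
  | zero => simp [sumX]
  | succ n ih => rw [sumX, ih, Finset.sum_Icc_succ_top (by omega)]

/-- Small heights: the certificate bound. -/
theorem core_small (k h : ℕ) (hk : 3225 ≤ k) (h4 : 4 ≤ h) (h200 : h ≤ 200)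
    (hkh : 2 * h * (h - 3) ≤ 3 * k) (L c : ℕ → ℕ)
    (hL : ∀ a b, 1 ≤ a → a ≤ h → 1 ≤ b → b ≤ h → b * L a + a * L b ≤ 2 * k)
    (hc : ∀ n, 1 ≤ n → n ≤ h → n * c n ≤ tP n * L n + tD n) :
    ∑ n ∈ Finset.Icc 1 h, c n ≤ k + 1 := by
  have hg := goodFrom_spec 197 goodFrom_all h h4 (by omega)
  rw [good, Bool.and_eq_true, Bool.and_eq_true, Nat.ble_eq, Nat.ble_eq] at hg
  obtain ⟨⟨g1, g2⟩, g3⟩ := hg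
  have s := chk_sound rowW L k h hL _ _ _ _ _ _ (le_refl 1) (by omega) (by omega) (le_refl h) g3
  have hs : ∑ n ∈ Finset.Icc 1 h, rowW n * L n =
      rowW 1 * L 1 + rowW h * L h + ∑ n ∈ Finset.Ioo 1 h, rowW n * L n := by
    have : Finset.Icc 1 h = insert 1 (insert h (Finset.Ioo 1 h)) := by
      ext n; simp only [Finset.mem_Icc, Finset.mem_Ioo, Finset.mem_insert]; omega
    rw [this, Finset.sum_insert (by simp; omega), Finset.sum_insert (by simp)]; ring
  rw [← hs] at s
  have ht : ∀ n ∈ Finset.Icc 1 h, scale * c n ≤ rowW n * L n + rowX n := by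
    intro n hn
    rw [Finset.mem_Icc] at hn
    have h1 : scale * tP n ≤ n * rowW n := by
      unfold rowW
      rw [mul_comm n]
      exact le_ceil_mul _ _ hn.1
    have h2 : scale * tD n ≤ n * rowX n := by
      unfold rowX
      rw [mul_comm n]
      exact le_ceil_mul _ _ hn.1
    have h3 := hc n hn.1 hn.2
    refine Nat.le_of_mul_le_mul_left ?_ hn.1
    calc n * (scale * c n) = scale * (n * c n) := by ring
      _ ≤ scale * (tP n * L n + tD n) := by gcongr
      _ = (scale * tP n) * L n + scale * tD n := by ring
      _ ≤ (n * rowW n) * L n + n * rowX n := by gcongr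
      _ = _ := by ring
  have hsum := Finset.sum_le_sum ht
  rw [← Finset.mul_sum, Finset.sum_add_distrib, ← sumX_eq] at hsum
  have hkm : kmin h ≤ k := by
    unfold kmin
    cases Nat.ble 3225 ((2 * h * (h - 3) + 2) / 3)
    · simpa using hk
    · simp only [cond_true]; omega
  have hB : budget h * (2 * kmin h) ≤ scale * (kmin h + 2) - 1 - sumX h := by
    unfold budget; exact Nat.div_mul_le_self _ _
  obtain ⟨e, he⟩ := Nat.exists_eq_add_of_le hkm
  generalize scale = S at *
  have hfin : 2 * k * budget h + sumX h + 1 ≤ S * (k + 2) := by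
    have : budget h * (2 * kmin h) + sumX h + 1 ≤ S * (kmin h + 2) := by omega
    have h3 : e * (2 * budget h) ≤ e * S := by gcongr
    rw [he]; nlinarith
  have : S * (∑ n ∈ Finset.Icc 1 h, c n) < S * (k + 2) := by omega
  have := Nat.lt_of_mul_lt_mul_left this
  omega

theorem sum_range_Icc {M : Type*} [AddCommMonoid M] (f : ℕ → M) (h : ℕ) :
    ∑ i ∈ Finset.range h, f (i + 1) = ∑ n ∈ Finset.Icc 1 h, f n := by
  induction h with
  | zero => simp
  | succ n ih => rw [Finset.sum_range_succ, ih, Finset.sum_Icc_succ_top (by omega)]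

open MeasureTheory in
theorem step_integrable (L : ℕ → ℕ) (n : ℕ) :
    IntervalIntegrable (fun t : ℝ => (L ⌈t⌉₊ : ℝ)) volume (n : ℝ) ((n + 1 : ℕ) : ℝ) ∧
      ∫ t in (n : ℝ)..((n + 1 : ℕ) : ℝ), (L ⌈t⌉₊ : ℝ) = L (n + 1) := by
  have hle : (n : ℝ) ≤ ((n + 1 : ℕ) : ℝ) := by push_cast; linarith
  have he : Set.EqOn (fun t : ℝ => (L ⌈t⌉₊ : ℝ)) (fun _ => (L (n + 1) : ℝ))
      (Set.Ioc (n : ℝ) ((n + 1 : ℕ) : ℝ)) := by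
    intro t ht
    have : ⌈t⌉₊ = n + 1 := by
      rw [Nat.ceil_eq_iff (by omega)]
      refine ⟨?_, ht.2⟩
      simpa using ht.1
    simp only [this]
  constructor
  · rw [intervalIntegrable_iff_integrableOn_Ioc_of_le hle]
    rw [integrableOn_congr_fun he measurableSet_Ioc]
    exact integrableOn_const (by simp)
  · rw [intervalIntegral.integral_of_le hle, setIntegral_congr_fun measurableSet_Ioc he,
      ← intervalIntegral.integral_of_le hle]
    simp

open MeasureTheory in
theorem sum_le_pi (L : ℕ → ℕ) (k h : ℕ) (hh : 1 ≤ h)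
    (hL : ∀ a b, 1 ≤ a → a ≤ h → 1 ≤ b → b ≤ h → b * L a + a * L b ≤ 2 * k) :
    (∑ n ∈ Finset.Icc 1 h, (L n : ℝ)) ≤ Real.pi / 2 * k := by
  set ρ : ℝ → ℝ := fun t => (L ⌈t⌉₊ : ℝ) with hρ
  have hI : IntervalIntegrable ρ volume (0 : ℝ) (h : ℝ) := by
    have := IntervalIntegrable.trans_iterate (f := ρ) (μ := volume) (a := fun n : ℕ => (n : ℝ))
      (n := h) (fun i _ => (step_integrable L i).1)
    simpa using this
  have hS : ∫ t in (0 : ℝ)..(h : ℝ), ρ t = ∑ n ∈ Finset.Icc 1 h, (L n : ℝ) := by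
    have := intervalIntegral.sum_integral_adjacent_intervals (f := ρ) (μ := volume)
      (a := fun n : ℕ => (n : ℝ)) (n := h) (fun i _ => (step_integrable L i).1)
    rw [Nat.cast_zero] at this
    rw [← this, Finset.sum_congr rfl (fun i _ => (step_integrable L i).2)]
    exact sum_range_Icc (fun n => (L n : ℝ)) h
  have hpi : (0 : ℝ) ≤ Real.pi / 2 := by positivity
  have hmin : min (0 : ℝ) (Real.pi / 2) = 0 := min_eq_left hpi
  have hmax : max (0 : ℝ) (Real.pi / 2) = Real.pi / 2 := max_eq_right hpi
  have hh0 : (0 : ℝ) < h := by exact_mod_cast hh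
  have hd1 : ∀ x : ℝ, HasDerivAt (fun x => (h : ℝ) * Real.sin x) (h * Real.cos x) x :=
    fun x => (Real.hasDerivAt_sin x).const_mul _
  have hd2 : ∀ x : ℝ, HasDerivAt (fun x => (h : ℝ) * Real.cos x) (h * (-Real.sin x)) x :=
    fun x => (Real.hasDerivAt_cos x).const_mul _
  have hc1 : ContinuousOn (fun x => (h : ℝ) * Real.sin x) (Set.uIcc 0 (Real.pi / 2)) := by fun_prop
  have hc2 : ContinuousOn (fun x => (h : ℝ) * Real.cos x) (Set.uIcc 0 (Real.pi / 2)) := by fun_prop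
  have hn1 : ∀ x ∈ Set.Ioo (min 0 (Real.pi / 2)) (max 0 (Real.pi / 2)), 0 ≤ h * Real.cos x := by
    intro x hx
    rw [hmin, hmax] at hx
    have := Real.cos_pos_of_mem_Ioo ⟨by linarith [hx.1], hx.2⟩
    positivity
  have hn2 : ∀ x ∈ Set.Ioo (min 0 (Real.pi / 2)) (max 0 (Real.pi / 2)),
      h * (-Real.sin x) ≤ 0 := by
    intro x hx
    rw [hmin, hmax] at hx
    have := Real.sin_pos_of_pos_of_lt_pi hx.1 (by linarith [hx.2, Real.pi_pos])
    nlinarith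
  have i1 := intervalIntegral.integral_comp_mul_deriv_of_deriv_nonneg (g := ρ) hc1
    (fun x _ => hd1 x) hn1
  have i2 := intervalIntegral.integral_comp_mul_deriv_of_deriv_nonpos (g := ρ) hc2
    (fun x _ => hd2 x) hn2
  have j1 := (intervalIntegral.integrable_comp_mul_deriv_iff_of_deriv_nonneg (g := ρ) hc1
    (fun x _ => hd1 x) hn1).2 (by simpa using hI)
  have j2 := (intervalIntegral.integrable_comp_mul_deriv_iff_of_deriv_nonpos (g := ρ) hc2
    (fun x _ => hd2 x) hn2).2 (by simpa using hI.symm)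
  simp only [Real.sin_zero, Real.cos_zero, Real.sin_pi_div_two, Real.cos_pi_div_two, mul_zero,
    mul_one] at i1 i2
  rw [intervalIntegral.integral_symm 0 (h : ℝ)] at i2
  rw [hS] at i1 i2
  have hb : (∫ x in (0 : ℝ)..(Real.pi / 2), ((ρ ∘ fun x => (h : ℝ) * Real.sin x) x * (h * Real.cos x)
      - (ρ ∘ fun x => (h : ℝ) * Real.cos x) x * (h * (-Real.sin x)))) ≤
      ∫ x in (0 : ℝ)..(Real.pi / 2), (2 * k : ℝ) := by
    refine intervalIntegral.integral_mono_on_of_le_Ioo hpi (j1.sub j2) (by simp) ?_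
    intro x hx
    have hcos := Real.cos_pos_of_mem_Ioo ⟨by linarith [hx.1], hx.2⟩
    have hsin := Real.sin_pos_of_pos_of_lt_pi hx.1 (by linarith [hx.2, Real.pi_pos])
    have hs1 := Real.sin_le_one x
    have hs2 := Real.cos_le_one x
    have p1 : 0 < h * Real.sin x := by positivity
    have p2 : 0 < h * Real.cos x := by positivity
    have q1 : ⌈h * Real.sin x⌉₊ ≤ h := Nat.ceil_le.2 (by nlinarith)
    have q2 : ⌈h * Real.cos x⌉₊ ≤ h := Nat.ceil_le.2 (by nlinarith)
    have r1 := Nat.le_ceil (h * Real.sin x)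
    have r2 := Nat.le_ceil (h * Real.cos x)
    have := hL _ _ (Nat.ceil_pos.2 p1) q1 (Nat.ceil_pos.2 p2) q2
    have : (⌈h * Real.cos x⌉₊ * L ⌈h * Real.sin x⌉₊ + ⌈h * Real.sin x⌉₊ * L ⌈h * Real.cos x⌉₊ : ℝ)
      ≤ 2 * k := by exact_mod_cast this
    simp only [Function.comp, hρ]
    have m1 := mul_le_mul_of_nonneg_right r2 (Nat.cast_nonneg (α := ℝ) (L ⌈h * Real.sin x⌉₊))
    have m2 := mul_le_mul_of_nonneg_right r1 (Nat.cast_nonneg (α := ℝ) (L ⌈h * Real.cos x⌉₊))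
    linarith
  rw [intervalIntegral.integral_sub j1 j2, i1, i2, intervalIntegral.integral_const, smul_eq_mul]
    at hb
  linarith

/-- number of `y < x` coprime to `d` -/
def cf (d x : ℕ) : ℕ := Nat.count (fun y => Nat.gcd d y = 1) x

theorem cf_succ (d x : ℕ) : cf d (x + 1) = cf d x + if Nat.gcd d x = 1 then 1 else 0 := by
  unfold cf; rw [Nat.count_succ]

theorem cf_add_self (d x : ℕ) : cf d (x + d) = cf d x + cf d d := by
  unfold cf
  rw [Nat.add_comm x d, Nat.count_add, Nat.add_comm]
  simp

theorem cf_add_mul (d x s : ℕ) : cf d (x + d * s) = cf d x + s * cf d d := by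
  induction s with
  | zero => simp
  | succ s ih => rw [Nat.mul_succ, ← Nat.add_assoc, cf_add_self, ih]; ring

theorem scan_spec (d P x : ℕ) : (scan d P x).1 = cf d x ∧
    ∀ y ≤ x, (scan d P x).2.2 ≤ d * cf d y + P * (d - y) ∧
      d * cf d y + P * (d - y) ≤ (scan d P x).2.1 := by
  induction x with
  | zero =>
    refine ⟨by simp [scan, cf], ?_⟩
    intro y hy
    obtain rfl : y = 0 := by omega
    simp [scan, cf, mul_comm]
  | succ x ih =>
    obtain ⟨ih1, ih2⟩ := ih
    rcases hs : scan d P x with ⟨F, mx, mn⟩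
    rw [hs] at ih1 ih2
    simp only at ih1 ih2
    rw [scan, hs]
    simp only
    rw [cf_succ, ← ih1]
    by_cases hg : Nat.gcd d x = 1
    · have e : Nat.beq (Nat.gcd d x) 1 = true := by rw [Nat.beq_eq]; exact hg
      rw [e, cond_true, if_pos hg]
      refine ⟨rfl, ?_⟩
      intro y hy
      rcases Nat.lt_or_ge x y with h | h
      · obtain rfl : y = x + 1 := by omega
        rw [cf_succ, if_pos hg, ← ih1]
        exact ⟨min_le_right _ _, le_max_right _ _⟩
      · exact ⟨(min_le_left _ _).trans (ih2 y h).1, (ih2 y h).2.trans (le_max_left _ _)⟩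
    · have e : Nat.beq (Nat.gcd d x) 1 = false := by
        rw [← Bool.not_eq_true, Nat.beq_eq]; exact hg
      rw [e, cond_false, if_neg hg, Nat.add_zero]
      refine ⟨rfl, ?_⟩
      intro y hy
      rcases Nat.lt_or_ge x y with h | h
      · obtain rfl : y = x + 1 := by omega
        rw [cf_succ, if_neg hg, ← ih1, Nat.add_zero]
        exact ⟨min_le_right _ _, le_max_right _ _⟩
      · exact ⟨(min_le_left _ _).trans (ih2 y h).1, (ih2 y h).2.trans (le_max_left _ _)⟩

theorem tab_spec (d : ℕ) (h1 : 1 ≤ d) (h2 : d ≤ 210) : cf d d = tP d ∧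
    ∀ x ≤ d, ∀ y ≤ d, d * cf d x + tP d * (d - x) + tP d ≤ d * cf d y + tP d * (d - y) + tD d := by
  have h := tabFrom_spec 210 tabFrom_all d h1 h2
  obtain ⟨s1, s2⟩ := scan_spec d (tP d) d
  unfold tabOk at h
  rcases hs : scan d (tP d) d with ⟨F, mx, mn⟩
  rw [hs] at h s1 s2
  simp only at h s1 s2
  rw [Bool.and_eq_true, Nat.beq_eq, Nat.ble_eq] at h
  refine ⟨by rw [← s1]; exact h.1, ?_⟩
  intro x hx y hy
  have := (s2 x hx).2
  have := (s2 y hy).1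
  omega

theorem count_bound (d : ℕ) (h1 : 1 ≤ d) (h2 : d ≤ 210) (A : Finset ℤ) (a : ℤ) (l : ℕ)
    (hA : ∀ m ∈ A, Int.gcd m d = 1 ∧ a ≤ m ∧ m ≤ a + l) :
    d * A.card ≤ tP d * l + tD d := by
  obtain ⟨hP, hV⟩ := tab_spec d h1 h2
  have hd : (0 : ℤ) < d := by exact_mod_cast h1
  set q := a / (d : ℤ) with hq
  obtain ⟨a0, ha0⟩ : ∃ a0 : ℕ, a % (d : ℤ) = a0 := Int.eq_ofNat_of_zero_le (Int.emod_nonneg _ hd.ne')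
  have ha0d : a0 < d := by
    have := Int.emod_lt_of_pos a hd
    rw [ha0] at this; exact_mod_cast this
  have hadec : a = d * q + a0 := by rw [← ha0, hq]; exact (Int.mul_ediv_add_emod a d).symm
  have hcard : A.card + cf d a0 ≤ cf d (a0 + l + 1) := by
    have e1 : cf d (a0 + l + 1) = cf d a0 +
        ((Finset.Ico a0 (a0 + l + 1)).filter (fun y => Nat.gcd d y = 1)).card := by
      unfold cf
      rw [Nat.count_eq_card_filter_range, Nat.count_eq_card_filter_range,
        ← Finset.card_union_of_disjoint]
      · congr 1
        ext y; simp only [Finset.mem_filter, Finset.mem_range, Finset.mem_union, Finset.mem_Ico]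
        constructor
        · rintro ⟨u, v⟩
          by_cases y < a0
          · left; exact ⟨by omega, v⟩
          · right; exact ⟨by omega, v⟩
        · rintro (⟨u, v⟩ | ⟨u, v⟩)
          · exact ⟨by omega, v⟩
          · exact ⟨by omega, v⟩
      · rw [Finset.disjoint_left]
        intro y; simp only [Finset.mem_filter, Finset.mem_range, Finset.mem_Ico]; omega
    rw [e1, Nat.add_comm]
    gcongr
    refine Finset.card_le_card_of_injOn (fun m => (m - d * q).toNat) ?_ ?_
    · intro m hm
      obtain ⟨g, u, v⟩ := hA m hm
      obtain ⟨z, hz⟩ : ∃ z : ℕ, m - d * q = z := Int.eq_ofNat_of_zero_le (by linarith [Int.natCast_nonneg a0])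
      have hm' : m = z + d * q := by linarith
      simp only [Finset.coe_filter, Finset.mem_Ico, Set.mem_ofPred_eq]
      rw [hz, Int.toNat_natCast]
      refine ⟨⟨by omega, by omega⟩, ?_⟩
      rw [hm', Int.gcd_add_mul_left_left, Int.gcd_natCast_natCast] at g
      rw [Nat.gcd_comm]; exact g
    · intro m hm m' hm' he
      obtain ⟨_, u, v⟩ := hA m hm
      obtain ⟨_, u', v'⟩ := hA m' hm'
      simp only at he
      omega
  have hdm := Nat.mod_add_div (a0 + l + 1) d
  have hr := Nat.mod_lt (a0 + l + 1) h1
  set r := (a0 + l + 1) % d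
  set s := (a0 + l + 1) / d
  have hF : cf d (a0 + l + 1) = cf d r + s * tP d := by rw [← hdm, cf_add_mul, hP]
  have hv := hV r hr.le a0 ha0d.le
  rw [hF] at hcard
  zify [hr.le, ha0d.le] at *
  have : (d : ℤ) * (A.card + cf d a0) ≤ d * (cf d r + s * tP d) := by gcongr
  have hl : (l : ℤ) = r + d * s - a0 - 1 := by linarith
  rw [hl]
  linarith

def gT (n : ℕ) : ℕ := 210 / Nat.gcd n 210 * tP (Nat.gcd n 210)

def eT (n : ℕ) : ℕ := 210 / Nat.gcd n 210 * tD (Nat.gcd n 210)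

def pre (f : ℕ → ℕ) : ℕ → ℕ
  | 0 => 0
  | n + 1 => pre f n + f (n + 1)

theorem pre_eq (f : ℕ → ℕ) (h : ℕ) : pre f h = ∑ n ∈ Finset.Icc 1 h, f n := by
  induction h with
  | zero => simp [pre]
  | succ n ih => rw [pre, ih, Finset.sum_Icc_succ_top (by omega)]

theorem pre_add (f : ℕ → ℕ) (p : ℕ) (hf : ∀ n, f (n + p) = f n) (j : ℕ) :
    pre f (j + p) = pre f j + pre f p := by
  induction j with
  | zero => simp [pre]
  | succ j ih =>
    have : j + 1 + p = (j + p) + 1 := by omega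
    rw [this, pre, ih, pre, ← hf (j + 1), this]; omega

theorem pre_bound (f : ℕ → ℕ) (p A B : ℕ) (hp : 0 < p) (hf : ∀ n, f (n + p) = f n)
    (hA : pre f p ≤ A) (hB : ∀ j < p, p * pre f j ≤ A * j + B) :
    ∀ j, p * pre f j ≤ A * j + B := by
  intro j
  induction j using Nat.strong_induction_on with
  | _ j ih =>
    by_cases hj : j < p
    · exact hB j hj
    · obtain ⟨i, rfl⟩ := Nat.exists_eq_add_of_le' (Nat.le_of_not_lt hj)
      rw [pre_add f p hf]
      have := ih i (by omega)
      nlinarith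

theorem gT_per (n : ℕ) : gT (n + 210) = gT n := by unfold gT; rw [Nat.gcd_add_self_left]

theorem eT_per (n : ℕ) : eT (n + 210) = eT n := by unfold eT; rw [Nat.gcd_add_self_left]

theorem gT_bound (j : ℕ) : 210 * pre gT j ≤ 27648 * j + 20436 :=
  pre_bound gT 210 27648 20436 (by norm_num) gT_per (by decide +kernel) (by decide +kernel) j

theorem eT_bound (j : ℕ) : 210 * pre eT j ≤ 59352 * j + 0 :=
  pre_bound eT 210 59352 0 (by norm_num) eT_per (by decide +kernel) (by decide +kernel) j

/-- Abel summation against an antitone sequence. -/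
theorem abel (g L : ℕ → ℕ) (A B h : ℕ) (hh : 1 ≤ h)
    (hL : ∀ a b, 1 ≤ a → a ≤ b → b ≤ h → L b ≤ L a)
    (hg : ∀ j, 210 * pre g j ≤ A * j + B) :
    210 * ∑ n ∈ Finset.Icc 1 h, g n * L n ≤ A * ∑ n ∈ Finset.Icc 1 h, L n + B * L 1 := by
  have key : ∀ j, 1 ≤ j → j ≤ h → (210 * ∑ n ∈ Finset.Icc 1 j, (g n * L n : ℤ)) +
      (A * j + B - 210 * pre g j) * L j ≤ A * ∑ n ∈ Finset.Icc 1 j, (L n : ℤ) + B * L 1 := by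
    intro j hj
    induction j, hj using Nat.le_induction with
    | base => intro _; simp [pre]; linarith
    | succ j hj ih =>
      intro hjh
      have ih := ih (by omega)
      rw [Finset.sum_Icc_succ_top (by omega), Finset.sum_Icc_succ_top (by omega), pre]
      have h1 : (L (j + 1) : ℤ) ≤ L j := by exact_mod_cast hL j (j + 1) hj (by omega) hjh
      have h2 : (0 : ℤ) ≤ A * j + B - 210 * pre g j := by
        have : (210 * pre g j : ℤ) ≤ A * j + B := by exact_mod_cast hg j
        linarith
      push_cast
      nlinarith [mul_le_mul_of_nonneg_left h1 h2]
  have h2 : (0 : ℤ) ≤ A * h + B - 210 * pre g h := by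
    have : (210 * pre g h : ℤ) ≤ A * h + B := by exact_mod_cast hg h
    linarith
  have h3 := key h hh (le_refl h)
  have h4 : (0 : ℤ) ≤ (A * h + B - 210 * pre g h) * L h := mul_nonneg h2 (by positivity)
  zify
  linarith

theorem core_large (k h : ℕ) (h200 : 200 < h)
    (hkh : 2 * h * (h - 3) ≤ 3 * k) (L c : ℕ → ℕ)
    (hL : ∀ a b, 1 ≤ a → a ≤ h → 1 ≤ b → b ≤ h → b * L a + a * L b ≤ 2 * k)
    (hanti : ∀ a b, 1 ≤ a → a ≤ b → b ≤ h → L b ≤ L a)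
    (hc : ∀ n, 1 ≤ n → n ≤ h → ∀ d, d ∣ n → 1 ≤ d → d ≤ 210 → d * c n ≤ tP d * L n + tD d) :
    ∑ n ∈ Finset.Icc 1 h, c n ≤ k + 1 := by
  have hrow : ∀ n ∈ Finset.Icc 1 h, 210 * c n ≤ gT n * L n + eT n := by
    intro n hn
    rw [Finset.mem_Icc] at hn
    have h1 := hc n hn.1 hn.2 (Nat.gcd n 210) (Nat.gcd_dvd_left _ _)
      (Nat.gcd_pos_of_pos_right _ (by norm_num)) (Nat.gcd_le_right _ (by norm_num))
    have h2 := Nat.div_mul_cancel (Nat.gcd_dvd_right n 210)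
    unfold gT eT
    calc 210 * c n = 210 / Nat.gcd n 210 * Nat.gcd n 210 * c n := by rw [h2]
      _ = 210 / Nat.gcd n 210 * (Nat.gcd n 210 * c n) := by ring
      _ ≤ 210 / Nat.gcd n 210 * (tP (Nat.gcd n 210) * L n + tD (Nat.gcd n 210)) := by gcongr
      _ = _ := by ring
  have hsum := Finset.sum_le_sum hrow
  rw [← Finset.mul_sum, Finset.sum_add_distrib, ← pre_eq eT] at hsum
  have hab := abel gT L 27648 20436 h (by omega) hanti gT_bound
  have hE := eT_bound h
  have hpi := sum_le_pi L k h (by omega) hL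
  have hL1 : h * L 1 ≤ 2 * k := by
    have := hL 1 h (le_refl 1) (by omega) (by omega) (le_refl h)
    omega
  have hpi' : (∑ n ∈ Finset.Icc 1 h, (L n : ℝ)) ≤ 1.5708 * k := by
    have := Real.pi_lt_d4
    have hk0 : (0 : ℝ) ≤ k := Nat.cast_nonneg k
    nlinarith
  have hpiN : 10000 * ∑ n ∈ Finset.Icc 1 h, L n ≤ 15708 * k := by
    have : (10000 * ∑ n ∈ Finset.Icc 1 h, (L n : ℝ)) ≤ 15708 * k := by linarith
    exact_mod_cast this
  generalize ∑ n ∈ Finset.Icc 1 h, c n = C at *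
  generalize ∑ n ∈ Finset.Icc 1 h, L n = SL at *
  generalize ∑ n ∈ Finset.Icc 1 h, gT n * L n = G at *
  generalize pre eT h = Ee at *
  generalize L 1 = L1 at *
  have m1 : 44100 * C ≤ 27648 * SL + 20436 * L1 + 59352 * h := by omega
  by_contra hcon
  push Not at hcon
  have hC : k + 2 ≤ C := hcon
  -- scaled version: 670 * k <= 20436 * L1 + 59352 * h
  have m2 : 670 * k ≤ 20436 * L1 + 59352 * h := by omega
  obtain ⟨e, rfl⟩ := Nat.exists_eq_add_of_lt h200
  have e3 : 200 + e + 1 - 3 = 198 + e := by omega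
  rw [e3] at hkh
  generalize hH : 200 + e + 1 = H at *
  have m3 : 670 * k * H ≤ 40872 * k + 59352 * (H * H) := by nlinarith
  have m4 : (670 * H - 40872) * k ≤ 59352 * (H * H) := by
    rw [Nat.sub_mul]; 
    have : 670 * H * k = 670 * k * H := by ring
    omega
  have m5 : (670 * H - 40872) * (2 * H * (198 + e)) ≤ 3 * (59352 * (H * H)) := by
    calc _ ≤ (670 * H - 40872) * (3 * k) := by gcongr
      _ = 3 * ((670 * H - 40872) * k) := by ring
      _ ≤ _ := by gcongr
  have m6 : (670 * H - 40872) = 93798 + 670 * e := by omega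
  rw [m6] at m5
  have m7 : H * (2 * (93798 + 670 * e) * (198 + e)) ≤ H * (178056 * H) := by
    calc _ = (93798 + 670 * e) * (2 * H * (198 + e)) := by ring
      _ ≤ _ := m5
      _ = _ := by ring
  have m8 := Nat.le_of_mul_le_mul_left m7 (by omega)
  have m9 : 2 * (93798 + 670 * e) * (198 + e) = 37144008 + 452916 * e + 1340 * (e * e) := by ring
  rw [m9] at m8
  omega

theorem core (k h : ℕ) (hk : 3225 ≤ k) (h4 : 4 ≤ h)
    (hkh : 2 * h * (h - 3) ≤ 3 * k) (L c : ℕ → ℕ)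
    (hL : ∀ a b, 1 ≤ a → a ≤ h → 1 ≤ b → b ≤ h → b * L a + a * L b ≤ 2 * k)
    (hanti : ∀ a b, 1 ≤ a → a ≤ b → b ≤ h → L b ≤ L a)
    (hc : ∀ n, 1 ≤ n → n ≤ h → ∀ d, d ∣ n → 1 ≤ d → d ≤ 210 → d * c n ≤ tP d * L n + tD d) :
    ∑ n ∈ Finset.Icc 1 h, c n ≤ k + 1 := by
  rcases Nat.lt_or_ge 200 h with h2 | h2
  · exact core_large k h h2 hkh L c hL hanti hc
  · exact core_small k h hk h4 h2 hkh L c hL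
      (fun n h1 h3 => hc n h1 h3 n (dvd_refl n) h1 (by omega))

/-- the row of `T` at height `n` -/
def row (T : Finset (ℤ × ℤ)) (n : ℕ) : Finset ℤ :=
  (T.filter (fun p => p.2 = (n : ℤ))).image Prod.fst

theorem mem_row (T : Finset (ℤ × ℤ)) (n : ℕ) (m : ℤ) : m ∈ row T n ↔ (m, (n : ℤ)) ∈ T := by
  unfold row
  simp only [Finset.mem_image, Finset.mem_filter, Prod.exists, exists_and_right, exists_eq_right]

theorem row_len (T : Finset (ℤ × ℤ)) (n : ℕ) : ∃ l : ℕ, ∃ a : ℤ,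
    ((row T n).Nonempty → a ∈ row T n ∧ a + l ∈ row T n ∧ ∀ m ∈ row T n, a ≤ m ∧ m ≤ a + l) ∧
    (row T n = ∅ → l = 0) := by
  by_cases hne : (row T n).Nonempty
  · have hle : (row T n).min' hne ≤ (row T n).max' hne := Finset.min'_le_max' _ hne
    refine ⟨((row T n).max' hne - (row T n).min' hne).toNat, (row T n).min' hne, ?_, ?_⟩
    · intro _
      have e : (row T n).min' hne + (((row T n).max' hne - (row T n).min' hne).toNat : ℤ) =
        (row T n).max' hne := by rw [Int.toNat_of_nonneg (by linarith)]; ring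
      rw [e]
      exact ⟨Finset.min'_mem _ _, Finset.max'_mem _ _,
        fun m hm => ⟨Finset.min'_le _ _ hm, Finset.le_max' _ _ hm⟩⟩
    · intro h; rw [h] at hne; simp at hne
  · exact ⟨0, 0, fun h => absurd h hne, fun _ => rfl⟩

theorem card_row_zero (k : ℕ) (T : Finset (ℤ × ℤ)) (hT : IsKNice k (T : Set (ℤ × ℤ))) :
    (row T 0).card ≤ 1 := by
  obtain ⟨h1, h2, _⟩ := hT
  rw [Finset.card_le_one]
  intro a ha b hb
  rw [mem_row] at ha hb
  have ga := (h1 _ (Finset.mem_coe.2 ha)).2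
  have gb := (h1 _ (Finset.mem_coe.2 hb)).2
  simp only [Nat.cast_zero, Int.gcd_zero_right] at ga gb
  by_contra hab
  have : b = -a := by omega
  apply h2 _ (Finset.mem_coe.2 ha)
  rw [Finset.mem_coe]
  simpa [this] using hb

theorem card_le_rows (T : Finset (ℤ × ℤ)) (h : ℕ) (hT : ∀ p ∈ T, 0 ≤ p.2 ∧ p.2 ≤ h) :
    T.card ≤ (row T 0).card + ∑ n ∈ Finset.Icc 1 h, (row T n).card := by
  have e : ∑ n ∈ Finset.range (h + 1), (row T n).card =
      (row T 0).card + ∑ n ∈ Finset.Icc 1 h, (row T n).card := by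
    rw [Finset.sum_range_succ', sum_range_Icc (fun n => (row T n).card), Nat.add_comm]
  rw [← e]
  have hm : ∀ p ∈ T, p.2.toNat ∈ Finset.range (h + 1) := by
    intro p hp; have := hT p hp; rw [Finset.mem_range]; omega
  rw [Finset.card_eq_sum_card_fiberwise hm]
  refine Finset.sum_le_sum ?_
  intro n _
  refine Finset.card_le_card_of_injOn Prod.fst ?_ ?_
  · rintro ⟨x, y⟩ hp
    simp only [Finset.coe_filter, Set.mem_ofPred_eq] at hp
    have := hT _ hp.1
    simp only at this hp
    rw [Finset.mem_coe, mem_row]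
    have : y = n := by omega
    rw [← this]; exact hp.1
  · rintro ⟨x, y⟩ hp ⟨x', y'⟩ hp' he
    simp only [Finset.coe_filter, Set.mem_ofPred_eq] at hp hp' he
    have := hT _ hp.1
    have := hT _ hp'.1
    simp only at *
    rw [Prod.mk.injEq]
    exact ⟨he, by omega⟩

theorem card_le_of_height (k h : ℕ) (hk : 3225 ≤ k) (h4 : 4 ≤ h)
    (hkh : 2 * h * (h - 3) ≤ 3 * k) (T : Finset (ℤ × ℤ)) (hT : IsKNice k (T : Set (ℤ × ℤ)))
    (hh : ∀ p ∈ T, 0 ≤ p.2 ∧ p.2 ≤ h) (htop : ∃ p ∈ T, p.2 = h) : T.card ≤ k + 2 := by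
  have h0 := card_row_zero k T hT
  have h1 := card_le_rows T h hh
  choose len a hne hem using row_len T
  obtain ⟨hg, _, hdet⟩ := hT
  have htopne : (row T h).Nonempty := by
    obtain ⟨⟨x, y⟩, hp, rfl⟩ := htop
    exact ⟨x, (mem_row _ _ _).2 hp⟩
  have both : ∀ m n, (row T m).Nonempty → (row T n).Nonempty → n * len m + m * len n ≤ 2 * k := by
    intro m n hm hn
    obtain ⟨u1, u2, _⟩ := hne m hm
    obtain ⟨v1, v2, _⟩ := hne n hn
    rw [mem_row] at u1 u2 v1 v2
    have d1 := (abs_le.1 (hdet _ (Finset.mem_coe.2 u2) _ (Finset.mem_coe.2 v1))).2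
    have d2 := (abs_le.1 (hdet _ (Finset.mem_coe.2 v2) _ (Finset.mem_coe.2 u1))).2
    simp only at d1 d2
    zify
    linarith
  have one : ∀ m n, m ≤ h → row T m = ∅ → n * len m + m * len n ≤ 2 * k := by
    intro m n hm he
    rw [hem m he]
    rcases Finset.eq_empty_or_nonempty (row T n) with hn | hn
    · rw [hem n hn]; omega
    · have := both n h hn htopne
      nlinarith [Nat.mul_le_mul_right (len n) hm]
  have all : ∀ m n, m ≤ h → n ≤ h → n * len m + m * len n ≤ 2 * k := by
    intro m n hm hn
    rcases Finset.eq_empty_or_nonempty (row T m) with hm' | hm'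
    · exact one m n hm hm'
    · rcases Finset.eq_empty_or_nonempty (row T n) with hn' | hn'
      · have := one n m hn hn'; omega
      · exact both m n hm' hn'
  have := core k h hk h4 hkh (fun n => (Finset.Icc n h).sup len) (fun n => (row T n).card) ?_ ?_ ?_
  · omega
  · intro x y _ hx _ hy
    obtain ⟨m, hm, em⟩ := Finset.exists_mem_eq_sup (Finset.Icc x h) ⟨x, by simp [hx]⟩ len
    obtain ⟨n, hn, en⟩ := Finset.exists_mem_eq_sup (Finset.Icc y h) ⟨y, by simp [hy]⟩ len
    rw [em, en]
    rw [Finset.mem_Icc] at hm hn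
    have := all m n hm.2 hn.2
    have := Nat.mul_le_mul_right (len m) hn.1
    have := Nat.mul_le_mul_right (len n) hm.1
    omega
  · intro x y _ hxy _
    exact Finset.sup_mono (Finset.Icc_subset_Icc_left hxy)
  · intro n hn1 hn2 d hd hd1 hd2
    rcases Finset.eq_empty_or_nonempty (row T n) with he | hn'
    · rw [he]; simp
    · obtain ⟨_, _, hb⟩ := hne n hn'
      have hle : len n ≤ (Finset.Icc n h).sup len :=
        Finset.le_sup (f := len) (by simp [hn2])
      have := count_bound d hd1 hd2 (row T n) (a n) (len n) ?_
      · exact this.trans (by gcongr)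
      · intro m hm
        refine ⟨?_, hb m hm⟩
        rw [mem_row] at hm
        have := (hg _ (Finset.mem_coe.2 hm)).2
        simp only at this
        have h3 : Nat.Coprime m.natAbs n := by simpa [Int.gcd] using this
        have h4 := Nat.Coprime.coprime_dvd_right hd h3
        simpa [Int.gcd] using h4

theorem pigeon (k M : ℕ) (T : Finset (ℤ × ℤ)) (hT : IsKNice k (T : Set (ℤ × ℤ)))
    (hM : 1 ≤ M) (hc : 3 * M ^ 2 < 2 * T.card) :
    ∃ u : ℤ × ℤ, u ≠ (0, 0) ∧ ∀ x ∈ T, (M : ℤ) * |u.1 * x.2 - x.1 * u.2| ≤ k := by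
  obtain ⟨hg, hneg, hdet⟩ := hT
  set S := T ∪ T.image Neg.neg with hS
  have hScard : S.card = 2 * T.card := by
    rw [hS, Finset.card_union_of_disjoint, Finset.card_image_of_injective _ neg_injective]
    · ring
    · rw [Finset.disjoint_left]
      intro p hp hp'
      obtain ⟨q, hq, rfl⟩ := Finset.mem_image.1 hp'
      exact hneg q hq hp
  have hSmem : ∀ p ∈ S, p ∈ T ∨ -p ∈ T := by
    intro p hp
    rcases Finset.mem_union.1 hp with h | h
    · exact Or.inl h
    · obtain ⟨q, hq, rfl⟩ := Finset.mem_image.1 h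
      right; simpa using hq
  have hSdet : ∀ p ∈ S, ∀ x ∈ T, |p.1 * x.2 - x.1 * p.2| ≤ (k : ℤ) := by
    intro p hp x hx
    rcases hSmem p hp with h | h
    · exact hdet p h x hx
    · have := hdet _ h x hx
      rw [← abs_neg]
      convert this using 2
      simp only [Prod.fst_neg, Prod.snd_neg]; ring
  have hSpar : ∀ p ∈ S, ¬ (p.1 % 2 = 0 ∧ p.2 % 2 = 0) := by
    have aux : ∀ a b : ℤ, Int.gcd a b = 1 → ¬ (a % 2 = 0 ∧ b % 2 = 0) := by
      rintro a b hab ⟨h1, h2⟩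
      have := Int.dvd_coe_gcd (Int.dvd_of_emod_eq_zero h1) (Int.dvd_of_emod_eq_zero h2)
      rw [hab] at this
      norm_num at this
    intro p hp
    rcases hSmem p hp with h | h
    · exact aux _ _ (hg p h).2
    · have := aux _ _ (hg _ h).2
      simp only [Prod.fst_neg, Prod.snd_neg] at this
      omega
  let B : Finset (ℤ × ℤ) := {(0, 1), (1, 0), (1, 1)}
  have hB : B.card = 3 := by decide
  let R : Finset ((ℤ × ℤ) × (ℤ × ℤ)) := (Finset.Ico 0 (M : ℤ) ×ˢ Finset.Ico 0 (M : ℤ)) ×ˢ B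
  have hR : R.card = 3 * M ^ 2 := by
    simp only [R, Finset.card_product, hB, Int.card_Ico, sub_zero, Int.toNat_natCast]; ring
  let f : ℤ × ℤ → (ℤ × ℤ) × (ℤ × ℤ) :=
    fun p => (((p.1 / 2) % M, (p.2 / 2) % M), (p.1 % 2, p.2 % 2))
  have hM' : (0 : ℤ) < M := by exact_mod_cast hM
  obtain ⟨p, hp, q, hq, hpq, hf⟩ := Finset.exists_ne_map_eq_of_card_lt_of_maps_to
    (s := S) (t := R) (f := f) (by omega) (by
      intro p hp
      have := hSpar p hp
      simp only [R, f, Finset.coe_product, Set.mem_prod, Finset.mem_coe, Finset.mem_Ico, B,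
        Finset.mem_insert, Finset.mem_singleton, Prod.mk.injEq]
      refine ⟨⟨⟨Int.emod_nonneg _ hM'.ne', Int.emod_lt_of_pos _ hM'⟩,
        ⟨Int.emod_nonneg _ hM'.ne', Int.emod_lt_of_pos _ hM'⟩⟩, ?_⟩
      omega)
  simp only [f, Prod.mk.injEq] at hf
  obtain ⟨⟨e1, e2⟩, e3, e4⟩ := hf
  obtain ⟨u1, hu1⟩ := (Int.ModEq.dvd e1.symm : (M : ℤ) ∣ p.1 / 2 - q.1 / 2)
  obtain ⟨u2, hu2⟩ := (Int.ModEq.dvd e2.symm : (M : ℤ) ∣ p.2 / 2 - q.2 / 2)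
  have d1 : p.1 - q.1 = 2 * (M * u1) := by omega
  have d2 : p.2 - q.2 = 2 * (M * u2) := by omega
  refine ⟨(u1, u2), ?_, ?_⟩
  · intro h
    rw [Prod.mk.injEq] at h
    rw [h.1] at d1; rw [h.2] at d2
    apply hpq
    ext <;> simp at d1 d2 <;> omega
  · intro x hx
    have a1 := hSdet p hp x hx
    have a2 := hSdet q hq x hx
    rw [← abs_of_pos hM', ← abs_mul]
    rw [abs_le] at a1 a2 ⊢
    have : 2 * ((M : ℤ) * (u1 * x.2 - x.1 * u2)) =
        (p.1 * x.2 - x.1 * p.2) - (q.1 * x.2 - x.1 * q.2) := by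
      linear_combination (-x.2) * d1 + x.1 * d2
    simp only
    constructor <;> linarith

theorem transform (k M : ℕ) (T : Finset (ℤ × ℤ)) (hT : IsKNice k (T : Set (ℤ × ℤ)))
    (u : ℤ × ℤ) (hu : u ≠ (0, 0)) (h : ∀ x ∈ T, (M : ℤ) * |u.1 * x.2 - x.1 * u.2| ≤ k) :
    ∃ T' : Finset (ℤ × ℤ), IsKNice k (T' : Set (ℤ × ℤ)) ∧ T'.card = T.card ∧
      ∀ q ∈ T', (M : ℤ) * |q.2| ≤ k := by
  obtain ⟨hg, hneg, hdet⟩ := hT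
  have hd : Int.gcd u.1 u.2 ≠ 0 := by
    rw [Ne, Int.gcd_eq_zero_iff]
    intro h; exact hu (Prod.ext h.1 h.2)
  obtain ⟨x, hx⟩ := Int.gcd_dvd_left u.1 u.2
  obtain ⟨y, hy⟩ := Int.gcd_dvd_right u.1 u.2
  set g : ℤ := (Int.gcd u.1 u.2 : ℤ) with hgdef
  have hg1 : 1 ≤ g := by rw [hgdef]; omega
  obtain ⟨s, t, hst⟩ : ∃ s t : ℤ, s * x + t * y = 1 := by
    have hb := Int.gcd_eq_gcd_ab u.1 u.2
    rw [← hgdef] at hb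
    refine ⟨Int.gcdA u.1 u.2, Int.gcdB u.1 u.2, ?_⟩
    have h2 : g * (Int.gcdA u.1 u.2 * x + Int.gcdB u.1 u.2 * y) = g * 1 := by
      linear_combination (-1 : ℤ) * hb - Int.gcdA u.1 u.2 * hx - Int.gcdB u.1 u.2 * hy
    exact mul_left_cancel₀ (by omega) h2
  let f : ℤ × ℤ → ℤ × ℤ := fun p => (s * p.1 + t * p.2, x * p.2 - y * p.1)
  have i1 : ∀ p : ℤ × ℤ, p.1 = x * (f p).1 - t * (f p).2 := by
    intro p; simp only [f]; linear_combination (-p.1) * hst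
  have i2 : ∀ p : ℤ × ℤ, p.2 = y * (f p).1 + s * (f p).2 := by
    intro p; simp only [f]; linear_combination (-p.2) * hst
  have finj : Function.Injective f := by
    intro p q hpq
    ext
    · rw [i1 p, i1 q, hpq]
    · rw [i2 p, i2 q, hpq]
  have fneg : ∀ p, f (-p) = - f p := by
    intro p; simp only [f]; ext <;> simp <;> ring
  refine ⟨T.image f, ⟨?_, ?_, ?_⟩, Finset.card_image_of_injective _ finj, ?_⟩
  · intro q hq
    obtain ⟨p, hp, rfl⟩ := Finset.mem_image.1 (Finset.mem_coe.1 hq)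
    have hgc : Int.gcd (f p).1 (f p).2 = 1 := by
      have k1 : ((Int.gcd (f p).1 (f p).2 : ℕ) : ℤ) ∣ p.1 := by
        rw [i1 p]
        exact dvd_sub (Dvd.dvd.mul_left (Int.gcd_dvd_left _ _) _)
          (Dvd.dvd.mul_left (Int.gcd_dvd_right _ _) _)
      have k2 : ((Int.gcd (f p).1 (f p).2 : ℕ) : ℤ) ∣ p.2 := by
        rw [i2 p]
        exact dvd_add (Dvd.dvd.mul_left (Int.gcd_dvd_left _ _) _)
          (Dvd.dvd.mul_left (Int.gcd_dvd_right _ _) _)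
      have := Int.dvd_coe_gcd k1 k2
      rw [(hg p hp).2] at this
      exact Nat.dvd_one.1 (by exact_mod_cast this)
    refine ⟨?_, hgc⟩
    intro h0
    rw [h0] at hgc
    simp at hgc
  · intro q hq hq'
    obtain ⟨p, hp, rfl⟩ := Finset.mem_image.1 (Finset.mem_coe.1 hq)
    obtain ⟨p', hp', e⟩ := Finset.mem_image.1 (Finset.mem_coe.1 hq')
    rw [← fneg] at e
    rw [finj e] at hp'
    exact hneg p hp hp'
  · intro q hq q' hq'
    obtain ⟨p, hp, rfl⟩ := Finset.mem_image.1 (Finset.mem_coe.1 hq)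
    obtain ⟨p', hp', rfl⟩ := Finset.mem_image.1 (Finset.mem_coe.1 hq')
    have := hdet p hp p' hp'
    convert this using 2
    simp only [f]
    linear_combination (p.1 * p'.2 - p'.1 * p.2) * hst
  · intro q hq
    obtain ⟨p, hp, rfl⟩ := Finset.mem_image.1 hq
    refine le_trans ?_ (h p hp)
    have e : u.1 * p.2 - p.1 * u.2 = g * (f p).2 := by
      simp only [f]; linear_combination p.2 * hx - p.1 * hy
    rw [e, abs_mul, abs_of_pos (by omega : 0 < g)]
    have : |(f p).2| ≤ g * |(f p).2| := le_mul_of_one_le_left (abs_nonneg _) hg1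
    exact mul_le_mul_of_nonneg_left this (by positivity)

theorem normalize (k : ℕ) (T : Finset (ℤ × ℤ)) (hT : IsKNice k (T : Set (ℤ × ℤ))) :
    ∃ T' : Finset (ℤ × ℤ), IsKNice k (T' : Set (ℤ × ℤ)) ∧ T'.card = T.card ∧
      ∀ q ∈ T', ∃ p ∈ T, q.2 = |p.2| := by
  obtain ⟨hg, hneg, hdet⟩ := hT
  let f : ℤ × ℤ → ℤ × ℤ := fun p => if p.2 < 0 then -p else p
  have hf : ∀ p, f p = p ∨ f p = -p := by
    intro p; simp only [f]; split_ifs <;> simp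
  have key : ∀ p ∈ T, ∀ q ∈ T, p ≠ -q := by
    intro p hp q hq e; rw [e] at hp; exact hneg q hq hp
  refine ⟨T.image f, ⟨?_, ?_, ?_⟩, Finset.card_image_of_injOn ?_, ?_⟩
  · intro q hq
    obtain ⟨p, hp, rfl⟩ := Finset.mem_image.1 (Finset.mem_coe.1 hq)
    have h1 := (hg p hp).2
    have : Int.gcd (f p).1 (f p).2 = 1 := by
      rcases hf p with e | e <;> rw [e] <;> simpa using h1
    refine ⟨?_, this⟩
    intro h0; rw [h0] at this; simp at this
  · intro q hq hq'
    obtain ⟨p, hp, rfl⟩ := Finset.mem_image.1 (Finset.mem_coe.1 hq)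
    obtain ⟨p', hp', e⟩ := Finset.mem_image.1 (Finset.mem_coe.1 hq')
    have hp0 : p ≠ -p := key p hp p hp
    have h1 := key p hp p' hp'
    have h2 := key p' hp' p hp
    have hpp : p' = p ∨ p' = -p := by
      rcases hf p with e1 | e1 <;> rcases hf p' with e2 | e2 <;> rw [e1, e2] at e <;>
        simp_all
    rcases hpp with rfl | rfl
    · rcases hf p' with e1 | e1 <;> rw [e1] at e
      · exact hp0 e
      · rw [neg_neg] at e; exact hp0 e.symm
    · exact h2 rfl
  · intro q hq q' hq'
    obtain ⟨p, hp, rfl⟩ := Finset.mem_image.1 (Finset.mem_coe.1 hq)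
    obtain ⟨p', hp', rfl⟩ := Finset.mem_image.1 (Finset.mem_coe.1 hq')
    have h1 := hdet p hp p' hp'
    rw [abs_le] at h1 ⊢
    rcases hf p with e | e <;> rcases hf p' with e' | e' <;> rw [e, e'] <;>
      (try simp only [Prod.fst_neg, Prod.snd_neg]) <;> constructor <;> linarith [h1.1, h1.2]
  · intro p hp p' hp' e
    rcases hf p with e1 | e1 <;> rcases hf p' with e2 | e2 <;> rw [e1, e2] at e
    · exact e
    · exact absurd e (key p hp p' hp')
    · exact absurd e.symm (key p' hp' p hp)
    · exact neg_injective e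
  · intro q hq
    obtain ⟨p, hp, rfl⟩ := Finset.mem_image.1 hq
    refine ⟨p, hp, ?_⟩
    simp only [f]
    split_ifs with h
    · rw [abs_of_neg h]; rfl
    · rw [abs_of_nonneg (by omega)]

theorem card_le_three (k : ℕ) (T : Finset (ℤ × ℤ)) (hT : IsKNice k (T : Set (ℤ × ℤ)))
    (h3 : HeightLe (T : Set (ℤ × ℤ)) 3) : T.card ≤ 3 * k + 4 := by
  obtain ⟨T', hT', hc, hh⟩ := normalize k T hT
  rw [← hc]
  have h1 := card_le_rows T' 3 (by
    intro q hq
    obtain ⟨p, hp, e⟩ := hh q hq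
    rw [e]; exact ⟨abs_nonneg _, h3 p hp⟩)
  have h0 := card_row_zero k T' hT'
  have hr : ∀ n ∈ Finset.Icc 1 3, (row T' n).card ≤ k + 1 := by
    intro n hn
    have hn1 := (Finset.mem_Icc.1 hn).1
    rcases Finset.eq_empty_or_nonempty (row T' n) with he | hne
    · rw [he]; simp
    · obtain ⟨l, a, hl, _⟩ := row_len T' n
      obtain ⟨ha, hb, hall⟩ := hl hne
      have hsub : row T' n ⊆ Finset.Icc a (a + l) :=
        fun m hm => Finset.mem_Icc.2 (hall m hm)
      have := Finset.card_le_card hsub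
      rw [Int.card_Icc] at this
      rw [mem_row] at ha hb
      have hd := (abs_le.1 (hT'.2.2 _ (Finset.mem_coe.2 hb) _ (Finset.mem_coe.2 ha))).2
      simp only at hd
      have hd' : (l : ℤ) * n ≤ k := by linarith
      have : l ≤ l * n := Nat.le_mul_of_pos_right l hn1
      have : l * n ≤ k := by exact_mod_cast hd'
      omega
  have := Finset.sum_le_card_nsmul _ _ _ hr
  simp at this
  omega

theorem reduce (k : ℕ) (hk : 3225 ≤ k) (T : Finset (ℤ × ℤ)) (hT : IsKNice k (T : Set (ℤ × ℤ)))
    (hc : k + 3 ≤ T.card) : ∃ T' : Finset (ℤ × ℤ), IsKNice k (T' : Set (ℤ × ℤ)) ∧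
      T'.card = T.card ∧ HeightLe (T' : Set (ℤ × ℤ)) 3 := by
  set M := Nat.sqrt ((2 * k + 5) / 3) with hMdef
  have m1 : M * M ≤ (2 * k + 5) / 3 := Nat.sqrt_le _
  have m2 : (2 * k + 5) / 3 < (M + 1) * (M + 1) := Nat.lt_succ_sqrt _
  have hM1 : 1 ≤ M := by
    by_contra h
    have : M = 0 := by omega
    rw [this] at m2
    omega
  have m3 : 3 * (M * M) ≤ 2 * k + 5 := by omega
  have m4 : 2 * k + 6 ≤ 3 * ((M + 1) * (M + 1)) := by omega
  obtain ⟨u, hu, hub⟩ := pigeon k M T hT hM1 (by rw [pow_two]; omega)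
  obtain ⟨T1, hT1, c1, b1⟩ := transform k M T hT u hu hub
  obtain ⟨T2, hT2, c2, b2⟩ := normalize k T1 hT1
  refine ⟨T2, hT2, c2.trans c1, ?_⟩
  have hne : T2.Nonempty := by
    rw [← Finset.card_pos]; omega
  obtain ⟨p, hp, hmax⟩ := Finset.exists_max_image T2 Prod.snd hne
  have nn : ∀ q ∈ T2, 0 ≤ q.2 := by
    intro q hq
    obtain ⟨r, _, e⟩ := b2 q hq
    rw [e]; exact abs_nonneg _
  obtain ⟨h, hh⟩ := Int.eq_ofNat_of_zero_le (nn p hp)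
  by_cases h4 : 4 ≤ h
  · exfalso
    have hMh : M * h ≤ k := by
      obtain ⟨r, hr, e⟩ := b2 p hp
      have := b1 r hr
      rw [← e, hh] at this
      exact_mod_cast this
    have hkh : 2 * h * (h - 3) ≤ 3 * k := by
      obtain ⟨j, rfl⟩ : ∃ j, h = j + 3 := ⟨h - 3, by omega⟩
      rw [Nat.add_sub_cancel]
      have q1 : (2 * k + 6) * ((j + 3) * (j + 3)) ≤
          3 * ((M + 1) * (M + 1)) * ((j + 3) * (j + 3)) := Nat.mul_le_mul_right _ m4
      have q2 : (M * (j + 3)) * (M * (j + 3)) ≤ k * k := Nat.mul_le_mul hMh hMh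
      have q3 : (M * (j + 3)) * (j + 3) ≤ k * (j + 3) := Nat.mul_le_mul_right _ hMh
      have q4 : k * (2 * ((j + 3) * (j + 3))) ≤ k * (3 * k + 6 * (j + 3)) := by nlinarith
      have q5 := Nat.le_of_mul_le_mul_left q4 (by omega)
      nlinarith
    have := card_le_of_height k h hk h4 hkh T2 hT2
      (fun q hq => ⟨nn q hq, by have := hmax q hq; rw [hh] at this; exact this⟩) ⟨p, hp, hh⟩
    omega
  · intro q hq
    have h1 := nn q hq
    have h2 := hmax q hq
    rw [abs_of_nonneg h1]
    push_cast
    omega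

theorem example_nice (k : ℕ) (hk : 1 ≤ k) : ∃ T : Finset (ℤ × ℤ),
    IsKNice k (T : Set (ℤ × ℤ)) ∧ T.card = k + 2 ∧ HeightLe (T : Set (ℤ × ℤ)) 3 := by
  have hmem : ∀ p : ℤ × ℤ,
      p ∈ insert ((1 : ℤ), (0 : ℤ)) ((Finset.Icc (0 : ℤ) k).image (fun m => (m, (1 : ℤ)))) →
      (p.1 = 1 ∧ p.2 = 0) ∨ (0 ≤ p.1 ∧ p.1 ≤ k ∧ p.2 = 1) := by
    intro p hp
    rw [Finset.mem_insert, Finset.mem_image] at hp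
    rcases hp with rfl | ⟨m, hm, rfl⟩
    · left; simp
    · right
      rw [Finset.mem_Icc] at hm
      exact ⟨hm.1, hm.2, rfl⟩
  refine ⟨insert (1, 0) ((Finset.Icc (0 : ℤ) k).image (fun m => (m, (1 : ℤ)))),
    ⟨?_, ?_, ?_⟩, ?_, ?_⟩
  · intro p hp
    rcases hmem p hp with ⟨h1, h2⟩ | ⟨h1, h2, h3⟩
    · refine ⟨fun h => ?_, by rw [h1, h2]; simp⟩
      rw [h] at h1; simp at h1
    · refine ⟨fun h => ?_, by rw [h3]; simp⟩
      rw [h] at h3; simp at h3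
  · intro p hp hp'
    have a := hmem p hp
    have b := hmem _ hp'
    simp only [Prod.fst_neg, Prod.snd_neg] at b
    omega
  · intro p hp q hq
    rw [abs_le]
    rcases hmem p hp with ⟨h1, h2⟩ | ⟨h1, h2, h3⟩ <;>
      rcases hmem q hq with ⟨h4, h5⟩ | ⟨h4, h5, h6⟩
    · rw [h1, h2, h4, h5]; constructor <;> omega
    · rw [h1, h2, h6]; constructor <;> omega
    · rw [h3, h4, h5]; constructor <;> omega
    · rw [h3, h6]; constructor <;> omega
  · rw [Finset.card_insert_of_notMem (by simp), Finset.card_image_of_injective, Int.card_Icc]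
    · omega
    · intro a b h; simpa using h
  · intro p hp
    rw [abs_le]
    rcases hmem p hp with ⟨h1, h2⟩ | ⟨h1, h2, h3⟩ <;> push_cast <;> omega

theorem nice_subset (k : ℕ) (Q Q' : Set (ℤ × ℤ)) (h : Q ⊆ Q') (hQ : IsKNice k Q') :
    IsKNice k Q :=
  ⟨fun p hp => hQ.1 p (h hp), fun p hp hp' => hQ.2.1 p (h hp) (h hp'),
    fun p hp q hq => hQ.2.2 p (h hp) q (h hq)⟩

theorem main (k : ℕ) (hk : 3225 ≤ k) :
    ∃ Q : Set (ℤ × ℤ), IsKNice k Q ∧ HeightLe Q 3 ∧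
      ∀ Q' : Set (ℤ × ℤ), IsKNice k Q' → Q'.Finite ∧ Q'.ncard ≤ Q.ncard := by
  classical
  let P : ℕ → Prop := fun c => ∃ T : Finset (ℤ × ℤ), IsKNice k (T : Set (ℤ × ℤ)) ∧
    T.card = c ∧ HeightLe (T : Set (ℤ × ℤ)) 3
  have hbd : ∀ c, P c → c ≤ 3 * k + 4 := by
    rintro c ⟨T, h1, rfl, h3⟩
    exact card_le_three k T h1 h3
  have hex : P (k + 2) := example_nice k (by omega)
  have hmaxP : P (Nat.findGreatest P (3 * k + 4)) :=
    Nat.findGreatest_spec (hbd _ hex) hex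
  have hle : ∀ c, P c → c ≤ Nat.findGreatest P (3 * k + 4) :=
    fun c hc => Nat.le_findGreatest (hbd c hc) hc
  obtain ⟨T, hT, hTc, hTh⟩ := hmaxP
  refine ⟨T, hT, hTh, ?_⟩
  have hfin : ∀ S : Finset (ℤ × ℤ), IsKNice k (S : Set (ℤ × ℤ)) → S.card ≤ T.card := by
    intro S hS
    rw [hTc]
    rcases Nat.lt_or_ge S.card (k + 3) with h | h
    · have := hle _ hex
      omega
    · obtain ⟨S', h1, h2, h3⟩ := reduce k hk S hS h
      exact hle _ ⟨S', h1, h2, h3⟩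
  intro Q' hQ'
  have hQfin : Q'.Finite := by
    by_contra hinf
    obtain ⟨S, hS, hSc⟩ := Set.Infinite.exists_subset_card_eq hinf (T.card + 1)
    have := hfin S (nice_subset k _ _ hS hQ')
    omega
  refine ⟨hQfin, ?_⟩
  rw [Set.ncard_coe_finset, Set.ncard_eq_toFinset_card Q' hQfin]
  apply hfin
  rw [Set.Finite.coe_toFinset]
  exact hQ'

end KNice

theorem exists_max_kNice_height_le_three (k : ℕ) (hk : 3225 ≤ k) :
    ∃ Q : Set (ℤ × ℤ), IsKNice k Q ∧ HeightLe Q 3 ∧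
      ∀ Q' : Set (ℤ × ℤ), IsKNice k Q' → Q'.Finite ∧ Q'.ncard ≤ Q.ncard := by
  exact KNice.main k hk
end

section
/- Let k be an integer with 2 ≤ k ≤ 3224. For every k-nice set Q ⊆ ℤ², there exists a k-nice set equivalent to Q whose height is at most √(4k/3). -/
/-- Core inequality: the three-point configuration. -/
lemma core_ineq (h M k a b c d : ℤ) (hM : h ≤ M) (ha : 0 < a) (hb : 0 < b)
    (hbh : b ≤ h) (hd : -h ≤ d) (hcM : c ≤ M) (hcd : M ≤ c - d)
    (h1 : M * h - a * b ≤ k) (h2 : c * h - a * d ≤ k) (h3 : c * b - M * d ≤ k) :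
    3 * h ^ 2 ≤ 4 * k := by
  by_contra hlt
  push Not at hlt
  obtain ⟨e, rfl⟩ : ∃ e, d = -e := ⟨-d, by ring⟩
  have he : 0 ≤ e := by linarith
  have hh : 0 < h := by linarith
  have hc : M - e ≤ c := by linarith
  have hMh : h ^ 2 ≤ M * h := by nlinarith
  have i1 : h ^ 2 < 4 * (a * b) := by nlinarith
  have hch : (M - e) * h ≤ c * h := mul_le_mul_of_nonneg_right hc hh.le
  have hcb : (M - e) * b ≤ c * b := mul_le_mul_of_nonneg_right hc hb.le
  have i2 : h ^ 2 < 4 * (e * (h - a)) := by nlinarith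
  have hMbe : h * (b + e) ≤ M * (b + e) := mul_le_mul_of_nonneg_right hM (by linarith)
  have i3 : h ^ 2 < 4 * ((h - b) * (h - e)) := by nlinarith
  have hp : 0 < h ^ 2 := by positivity
  have j1 : 4 * (a * (h - a)) ≤ h ^ 2 := by nlinarith [sq_nonneg (h - 2 * a)]
  have j2 : 4 * (b * (h - b)) ≤ h ^ 2 := by nlinarith [sq_nonneg (h - 2 * b)]
  have j3 : 4 * (e * (h - e)) ≤ h ^ 2 := by nlinarith [sq_nonneg (h - 2 * e)]
  have hha : 0 < h - a := by
    by_contra hn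
    have : e * (h - a) ≤ 0 := mul_nonpos_of_nonneg_of_nonpos he (by linarith)
    linarith
  have hhe : 0 ≤ h - e := by linarith
  have hhb : 0 ≤ h - b := by linarith
  have l1 : (h ^ 2) * (h ^ 2) < 4 * (a * b) * (4 * (e * (h - a))) :=
    mul_lt_mul'' i1 i2 hp.le hp.le
  have l2 : (h ^ 2) * (h ^ 2) * h ^ 2
      < 4 * (a * b) * (4 * (e * (h - a))) * (4 * ((h - b) * (h - e))) :=
    mul_lt_mul'' l1 i3 (by positivity) hp.le
  have m1 : 4 * (a * (h - a)) * (4 * (b * (h - b))) ≤ h ^ 2 * h ^ 2 :=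
    mul_le_mul j1 j2 (by positivity) hp.le
  have m2 : 4 * (a * (h - a)) * (4 * (b * (h - b))) * (4 * (e * (h - e)))
      ≤ h ^ 2 * h ^ 2 * h ^ 2 :=
    mul_le_mul m1 j3 (by positivity) (by positivity)
  nlinarith

/-- The core inequality with `C` given up to sign. -/
lemma core_ineq_abs (h M k a b c d : ℤ) (hM : h ≤ M) (ha : 0 < a) (hb : 0 < b)
    (hbh : b ≤ h) (hd : |d| ≤ h) (hcM : |c| ≤ M) (hcd : M ≤ |c - d|)
    (h1 : |M * h - a * b| ≤ k) (h2 : |c * h - a * d| ≤ k) (h3 : |c * b - M * d| ≤ k) :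
    3 * h ^ 2 ≤ 4 * k := by
  rw [abs_le] at hd hcM h1 h2 h3
  rcases le_abs.1 hcd with hcd | hcd
  · exact core_ineq h M k a b c d hM ha hb hbh hd.1 hcM.2 hcd h1.2 h2.2 h3.2
  · exact core_ineq h M k a b (-c) (-d) hM ha hb hbh (by linarith) (by linarith) (by linarith)
      h1.2 (by linarith) (by linarith)

/-- Four extremal points of a reduced configuration force `3 h² ≤ 4 k`. -/
lemma four_points (h M k : ℤ) (hM : h ≤ M) (S : Set (ℤ × ℤ))
    (hneg : ∀ p ∈ S, -p ∈ S)
    (hS : ∀ p ∈ S, |p.1| ≤ M ∧ |p.2| ≤ h)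
    (hdet : ∀ p ∈ S, ∀ q ∈ S, |p.1 * q.2 - q.1 * p.2| ≤ k)
    (e1 : ∃ p ∈ S, h ≤ |p.2|) (e2 : ∃ p ∈ S, M ≤ |p.1|)
    (e3 : ∃ p ∈ S, M ≤ |p.1 - p.2|) (e4 : ∃ p ∈ S, M ≤ |p.1 + p.2|) :
    3 * h ^ 2 ≤ 4 * k := by
  obtain ⟨a, haS⟩ : ∃ a, (a, h) ∈ S := by
    obtain ⟨⟨a, y⟩, hp, hy⟩ := e1
    have := (hS _ hp).2
    rcases abs_choice y with hc | hc
    · exact ⟨a, by rwa [show h = y by simp only at *; linarith]⟩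
    · refine ⟨-a, ?_⟩
      rw [show h = -y by simp only at *; linarith]
      exact hneg _ hp
  obtain ⟨b, hbS⟩ : ∃ b, (M, b) ∈ S := by
    obtain ⟨⟨x, b⟩, hp, hy⟩ := e2
    have := (hS _ hp).1
    rcases abs_choice x with hc | hc
    · exact ⟨b, by rwa [show M = x by simp only at *; linarith]⟩
    · refine ⟨-b, ?_⟩
      rw [show M = -x by simp only at *; linarith]
      exact hneg _ hp
  have hba := hdet _ hbS _ haS
  have hb' := (hS _ hbS).2
  have h0 : 0 ≤ h := (abs_nonneg _).trans hb'
  simp only at hba hb'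
  rw [abs_le] at hb'
  rcases le_or_gt (a * b) 0 with hab | hab
  · have := (abs_le.1 hba).2
    nlinarith
  rcases mul_pos_iff.1 hab with ⟨ha, hb⟩ | ⟨ha, hb⟩
  · obtain ⟨⟨c, d⟩, hp, hcd⟩ := e3
    exact core_ineq_abs h M k a b c d hM ha hb hb'.2 (hS _ hp).2 (hS _ hp).1 hcd hba
      (hdet _ hp _ haS) (hdet _ hp _ hbS)
  · obtain ⟨⟨c, d⟩, hp, hcd⟩ := e4
    have q2 := hdet _ hp _ haS
    have q3 := hdet _ hp _ hbS
    simp only at q2 q3 hcd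
    refine core_ineq_abs h M k (-a) (-b) c (-d) hM (by linarith) (by linarith) (by linarith)
      (by rw [abs_neg]; exact (hS _ hp).2) (hS _ hp).1 (by rwa [sub_neg_eq_add])
      (by rwa [neg_mul_neg]) (by rwa [neg_mul_neg]) ?_
    rw [← abs_neg]
    convert q3 using 2
    ring

/-- The image of a `k`-nice set under a unimodular matrix is `k`-nice. -/
lemma nice_image (k : ℕ) (Q : Set (ℤ × ℤ)) (hQ : IsKNice k Q) (x y z w : ℤ)
    (hD : |x * w - y * z| = 1) : IsKNice k (matApply !![x, y; z, w] '' Q) := by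
  obtain ⟨q1, q2, q3⟩ := hQ
  have hD2 : (x * w - y * z) * (x * w - y * z) = 1 := by
    rw [← abs_mul_abs_self, hD]; rfl
  have gcd1 : ∀ p ∈ matApply !![x, y; z, w] '' Q, Int.gcd p.1 p.2 = 1 := by
    rintro _ ⟨⟨m, n⟩, hp, rfl⟩
    have := (q1 _ hp).2
    rw [← Int.isCoprime_iff_gcd_eq_one] at this ⊢
    obtain ⟨s, t, hst⟩ := this
    simp only [matApply, Matrix.of_apply, Matrix.cons_val', Matrix.cons_val_zero,
      Matrix.cons_val_one, Matrix.cons_val_fin_one] at hst ⊢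
    refine ⟨(x * w - y * z) * (s * w - t * z), (x * w - y * z) * (t * x - s * y), ?_⟩
    linear_combination (s * m + t * n) * hD2 + hst
  refine ⟨fun p hp => ⟨?_, gcd1 p hp⟩, ?_, ?_⟩
  · rintro rfl
    simpa using gcd1 _ hp
  · rintro _ ⟨⟨m, n⟩, hp, rfl⟩ ⟨⟨m', n'⟩, hp', he⟩
    simp only [matApply, Matrix.of_apply, Matrix.cons_val', Matrix.cons_val_zero,
      Matrix.cons_val_one, Matrix.cons_val_fin_one, Prod.neg_mk, Prod.mk.injEq] at he
    obtain ⟨e1, e2⟩ := he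
    have u1 : m' = -m := by
      linear_combination (-m' - m) * hD2 + (x * w - y * z) * (w * e1 - y * e2)
    have u2 : n' = -n := by
      linear_combination (-n' - n) * hD2 + (x * w - y * z) * (x * e2 - z * e1)
    subst u1 u2
    exact q2 _ hp hp'
  · rintro _ ⟨⟨m, n⟩, hp, rfl⟩ _ ⟨⟨m', n'⟩, hp', rfl⟩
    have := q3 _ hp _ hp'
    simp only [matApply, Matrix.of_apply, Matrix.cons_val', Matrix.cons_val_zero,
      Matrix.cons_val_one, Matrix.cons_val_fin_one] at this ⊢
    calc _ = |(x * w - y * z) * (m * n' - m' * n)| := by congr 1; ring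
      _ ≤ _ := by rw [abs_mul, hD, one_mul]; exact this

/-- It suffices to find a unimodular matrix for which `3 n² ≤ 4 k` on the image. -/
lemma finish (k : ℕ) (Q : Set (ℤ × ℤ)) (hQ : IsKNice k Q) (x y z w : ℤ)
    (hD : |x * w - y * z| = 1) (h : ℕ) (hh : 3 * (h : ℤ) ^ 2 ≤ 4 * k)
    (hb : ∀ p ∈ Q, |z * p.1 + w * p.2| ≤ (h : ℤ)) :
    ∃ Q' : Set (ℤ × ℤ), EquivSets Q Q' ∧ IsKNice k Q' ∧
      ∀ p ∈ Q', ((|p.2| : ℤ) : ℝ) ≤ Real.sqrt (4 * k / 3) := by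
  refine ⟨matApply !![x, y; z, w] '' Q, ⟨!![x, y; z, w], ?_, id, fun _ => Or.inl rfl, ?_⟩,
    nice_image k Q hQ x y z w hD, ?_⟩
  · rw [Matrix.det_fin_two_of]; exact hD
  · simp
  · rintro _ ⟨p, hp, rfl⟩
    have h1 : |(matApply !![x, y; z, w] p).2| ≤ (h : ℤ) := by
      simpa [matApply] using hb p hp
    have h2 : ((|(matApply !![x, y; z, w] p).2| : ℤ) : ℝ) ≤ (h : ℝ) := by exact_mod_cast h1
    refine h2.trans (Real.le_sqrt_of_sq_le ?_)
    have h3 : 3 * (h : ℝ) ^ 2 ≤ 4 * k := by exact_mod_cast hh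
    linarith

/-- `Q` fits in an `M × h` box after a unimodular change of coordinates. -/
def FitsBox (Q : Set (ℤ × ℤ)) (M h : ℕ) : Prop :=
  ∃ x y z w : ℤ, |x * w - y * z| = 1 ∧
    ∀ p ∈ Q, |x * p.1 + y * p.2| ≤ (M : ℤ) ∧ |z * p.1 + w * p.2| ≤ (h : ℤ)

lemma FitsBox.swap {Q : Set (ℤ × ℤ)} {M h : ℕ} (H : FitsBox Q M h) : FitsBox Q h M := by
  obtain ⟨x, y, z, w, hD, hb⟩ := H
  refine ⟨z, w, x, y, ?_, fun p hp => (hb p hp).symm⟩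
  rw [← abs_neg, ← hD]; congr 1; ring

/-- In a minimal box, sheared first coordinates still attain the bound. -/
lemma attain {Q : Set (ℤ × ℤ)} {M h : ℕ} (hne : Q.Nonempty)
    (hmin : ∀ M' h', FitsBox Q M' h' → M + h ≤ M' + h') (x y z w : ℤ)
    (hD : |x * w - y * z| = 1) (hb : ∀ p ∈ Q, |z * p.1 + w * p.2| ≤ (h : ℤ)) :
    ∃ p ∈ Q, (M : ℤ) ≤ |x * p.1 + y * p.2| := by
  by_contra hcon
  push Not at hcon
  obtain ⟨p0, hp0⟩ := hne
  have hpos : (0 : ℤ) < M := (abs_nonneg _).trans_lt (hcon p0 hp0)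
  have := hmin (M - 1) h ⟨x, y, z, w, hD, fun p hp => ⟨?_, hb p hp⟩⟩
  · omega
  · have := hcon p hp
    omega

lemma exists_min_box {Q : Set (ℤ × ℤ)} (H : ∃ M h, FitsBox Q M h) :
    ∃ M h, FitsBox Q M h ∧ h ≤ M ∧ ∀ M' h', FitsBox Q M' h' → M + h ≤ M' + h' := by
  classical
  have H' : ∃ n, ∃ M h, FitsBox Q M h ∧ M + h = n := by
    obtain ⟨M, h, H⟩ := H
    exact ⟨_, M, h, H, rfl⟩
  obtain ⟨M, h, hf, hn⟩ := Nat.find_spec H'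
  have hm : ∀ M' h', FitsBox Q M' h' → M + h ≤ M' + h' := by
    intro M' h' hf'
    rw [hn]
    exact Nat.find_min' H' ⟨M', h', hf', rfl⟩
  rcases le_total h M with hle | hle
  · exact ⟨M, h, hf, hle, hm⟩
  · exact ⟨h, M, hf.swap, hle, fun M' h' H => by have := hm M' h' H; omega⟩

/-- If `Q` contains two independent vectors it is bounded. -/
lemma exists_box {k : ℕ} {Q : Set (ℤ × ℤ)} (hQ : IsKNice k Q) {p q : ℤ × ℤ}
    (hp : p ∈ Q) (hq : q ∈ Q) (hD : p.1 * q.2 - q.1 * p.2 ≠ 0) : ∃ M h, FitsBox Q M h := by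
  have key : ∀ (s t u : ℤ) (α β : ℤ), |α| ≤ k → |β| ≤ k →
      (p.1 * q.2 - q.1 * p.2) * u = s * α + t * β → |u| ≤ k * (|s| + |t|) := by
    intro s t u α β hα hβ he
    have h1 : 1 ≤ |p.1 * q.2 - q.1 * p.2| := Int.one_le_abs hD
    calc |u| ≤ |p.1 * q.2 - q.1 * p.2| * |u| := le_mul_of_one_le_left (abs_nonneg _) h1
      _ = |s * α + t * β| := by rw [← abs_mul, he]
      _ ≤ |s| * |α| + |t| * |β| := by rw [← abs_mul, ← abs_mul]; exact abs_add_le _ _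
      _ ≤ |s| * k + |t| * k := by gcongr
      _ = _ := by ring
  refine ⟨k * (p.1.natAbs + q.1.natAbs), k * (p.2.natAbs + q.2.natAbs), 1, 0, 0, 1,
    by norm_num, fun r hr => ?_⟩
  have d1 := hQ.2.2 p hp r hr
  have d2 := hQ.2.2 q hq r hr
  push_cast [Int.natCast_natAbs]
  constructor
  · rw [one_mul, zero_mul, add_zero, ← abs_neg p.1]
    exact key (-p.1) q.1 r.1 _ _ d2 d1 (by ring)
  · rw [one_mul, zero_mul, zero_add, ← abs_neg p.2]
    exact key (-p.2) q.2 r.2 _ _ d2 d1 (by ring)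

theorem exists_equiv_height_le_sqrt_four_k_div_three (k : ℕ) (hk2 : 2 ≤ k)
    (hk : k ≤ 3224) (Q : Set (ℤ × ℤ)) (hQ : IsKNice k Q) :
    ∃ Q' : Set (ℤ × ℤ), EquivSets Q Q' ∧ IsKNice k Q' ∧
      ∀ p ∈ Q', ((|p.2| : ℤ) : ℝ) ≤ Real.sqrt (4 * k / 3) := by
  by_cases hdeg : ∀ p ∈ Q, ∀ q ∈ Q, p.1 * q.2 - q.1 * p.2 = 0
  · rcases Q.eq_empty_or_nonempty with hE | ⟨p, hp⟩
    · exact finish k Q hQ 1 0 0 1 (by norm_num) 0 (by simp) (by simp [hE])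
    · have hg := (hQ.1 p hp).2
      rw [← Int.isCoprime_iff_gcd_eq_one] at hg
      obtain ⟨s, t, hst⟩ := hg
      refine finish k Q hQ s t (-p.2) p.1 ?_ 0 (by simp) fun q hq => ?_
      · rw [show s * p.1 - t * -p.2 = 1 by linarith]; rfl
      · rw [show -p.2 * q.1 + p.1 * q.2 = 0 by linarith [hdeg p hp q hq]]; simp
  · push Not at hdeg
    obtain ⟨p0, hp0, q0, hq0, hpq⟩ := hdeg
    have hne : Q.Nonempty := ⟨p0, hp0⟩
    obtain ⟨M, h, ⟨x, y, z, w, hD, hb⟩, hle, hmin⟩ := exists_min_box (exists_box hQ hp0 hq0 hpq)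
    refine finish k Q hQ x y z w hD h ?_ fun p hp => (hb p hp).2
    have hN := nice_image k Q hQ x y z w hD
    have hb2 := fun p hp => (hb p hp).2
    have hD' : |z * y - w * x| = 1 := by rw [← abs_neg, ← hD]; congr 1; ring
    obtain ⟨r1, hr1, e1⟩ := attain (M := h) (h := M) hne
      (fun M' h' H => by have := hmin M' h' H; omega) z w x y hD' (fun p hp => (hb p hp).1)
    obtain ⟨r2, hr2, e2⟩ := attain hne hmin x y z w hD hb2
    obtain ⟨r3, hr3, e3⟩ := attain hne hmin (x - z) (y - w) z w
      (by rw [← hD]; congr 1; ring) hb2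
    obtain ⟨r4, hr4, e4⟩ := attain hne hmin (x + z) (y + w) z w
      (by rw [← hD]; congr 1; ring) hb2
    have mem : ∀ r ∈ Q, (x * r.1 + y * r.2, z * r.1 + w * r.2) ∈
        matApply !![x, y; z, w] '' Q := fun r hr => ⟨r, hr, by simp [matApply]⟩
    have bd : ∀ p ∈ matApply !![x, y; z, w] '' Q, |p.1| ≤ (M : ℤ) ∧ |p.2| ≤ (h : ℤ) := by
      rintro _ ⟨r, hr, rfl⟩
      simpa [matApply] using hb r hr
    generalize matApply !![x, y; z, w] '' Q = R at hN mem bd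
    refine four_points h M k (by exact_mod_cast hle) {p | p ∈ R ∨ -p ∈ R} ?_ ?_ ?_
      ⟨_, Or.inl (mem r1 hr1), e1⟩ ⟨_, Or.inl (mem r2 hr2), e2⟩
      ⟨_, Or.inl (mem r3 hr3), ?_⟩ ⟨_, Or.inl (mem r4 hr4), ?_⟩
    · rintro p (hp | hp)
      · right; simpa using hp
      · left; exact hp
    · rintro p (hp | hp)
      · exact bd p hp
      · simpa using bd _ hp
    · rintro p (hp | hp) q (hq | hq)
      · exact hN.2.2 p hp q hq
      · have := hN.2.2 p hp _ hq
        rw [← abs_neg]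
        convert this using 2
        simp; ring
      · have := hN.2.2 _ hp q hq
        rw [← abs_neg]
        convert this using 2
        simp; ring
      · simpa using hN.2.2 _ hp _ hq
    · convert e3 using 2; ring
    · convert e4 using 2; ring
end
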